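/- arXiv:2501.00690 — 3 statements merged into one kernel-verified Lean document; each statement's English description precedes it below -/
import Mathlib

section
/- For every solution (Z,Q) of the linearized symmetrized Boussinesq–Couette system at frequency (k,η) with k ≠ 0 and for every t ≥ 0, the following differential inequality holds: α·(d/dt)[ 𝔍(t)·(η − kt)²·(|Z(t)|² + |Q(t)|²) + (1/(2√R))·(p′(t)/(|k|·p(t)^{1/2}))·𝔍(t)·(η − kt)²·Re(Z(t)·conj(Q(t))) ] + α·(1/2 − 1/(4√R))·k²·(η − kt)²·p(t)^{−1}·(|Z(t)|² + |Q(t)|²) ≤ 16π·(R/ε)·α·μ·p(t)·(η − kt)²·(|Z(t)|² + |Q(t)|²) + (π/(8√R))·α·|k|³·(η − kt)²·p(t)^{−3/2}·(|Z(t)|² + |Q(t)|²) + (π/4)·(β·k²·(|Z(t)|² + |Q(t)|²))^{1/2}·(μ·p(t)·(|Z(t)|² + |Q(t)|²))^{1/2}. -/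
open Real MeasureTheory

noncomputable section

/-- The moving-frame Laplacian symbol `p(t) = k² + (η − kt)²`. -/
def pfun (k η t : ℝ) : ℝ := k ^ 2 + (η - k * t) ^ 2

/-- Its time derivative `p′(t) = −2k(η − kt)`. -/
def pder (k η t : ℝ) : ℝ := -(2 * k * (η - k * t))

/-- The symmetrizing weight `G(t) = p′(t)/(|k|·p(t)^{1/2})`. -/
def Gfun (k η t : ℝ) : ℝ := pder k η t / (|k| * Real.sqrt (pfun k η t))

/-- The exponential weight `N(t) = exp(−G(t)/(2√R − 1))`. -/
def Nfun (R k η t : ℝ) : ℝ := Real.exp (-(1 / (2 * Real.sqrt R - 1)) * Gfun k η t)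

/-- The inviscid damping multiplier `𝔍(t) = (1/2)·arctan(η/k − t)`. -/
def Jfun (k η t : ℝ) : ℝ := (1 / 2) * Real.arctan (η / k - t)

/-- The effective diffusivity `μ`. -/
def muDef (R ν κ : ℝ) : ℝ :=
  min ν κ * (1 - 1 / (4 * Real.sqrt R) - 1 / (4 * Real.sqrt R) * (max ν κ / min ν κ))

/-- The decay rate `λ`. -/
def lamDef (ν μ k : ℝ) : ℝ :=
  if μ ≤ |k| then μ ^ ((1 : ℝ) / 3) * |k| ^ ((2 : ℝ) / 3) else k ^ 2 / ν

/-- The weight `α`. -/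
def alphaDef (μ k : ℝ) : ℝ :=
  if |k| < μ then 1 else μ ^ ((2 : ℝ) / 3) * |k| ^ (-(2 : ℝ) / 3)

/-- The weight `β`. -/
def betaDef (μ k : ℝ) : ℝ :=
  if |k| < μ then μ⁻¹ else μ ^ ((1 : ℝ) / 3) * |k| ^ (-(4 : ℝ) / 3)

/-- `(Z, Q)` is a solution of the linearized symmetrized Boussinesq–Couette system
at frequency `(k, η)`. -/
def IsSol (R ν κ k η : ℝ) (Z Q : ℝ → ℂ) : Prop :=
  ∀ t : ℝ, 0 ≤ t →
    HasDerivAt Z ((((1 / 4) * (pder k η t / pfun k η t) : ℝ) : ℂ) * Z t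
        - ((Real.sqrt R * (|k| / Real.sqrt (pfun k η t)) : ℝ) : ℂ) * Q t
        - ((ν * pfun k η t : ℝ) : ℂ) * Z t) t ∧
    HasDerivAt Q (-(((1 / 4) * (pder k η t / pfun k η t) : ℝ) : ℂ) * Q t
        + ((Real.sqrt R * (|k| / Real.sqrt (pfun k η t)) : ℝ) : ℂ) * Z t
        - ((κ * pfun k η t : ℝ) : ℂ) * Q t) t

/-- The hypocoercive pointwise energy functional `E_k`. -/
def energy (R cτ cα cβ μ k η : ℝ) (Z Q : ℝ → ℂ) (t : ℝ) : ℝ :=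
  (Nfun R k η t + cτ * Jfun k η t) * (‖Z t‖ ^ 2 + ‖Q t‖ ^ 2)
    + 1 / (2 * Real.sqrt R) * Gfun k η t * (Nfun R k η t + cτ * Jfun k η t)
        * (Z t * (starRingEnd ℂ) (Q t)).re
    + cα * alphaDef μ k *
        ((Nfun R k η t + cτ * Jfun k η t) * (η - k * t) ^ 2 * (‖Z t‖ ^ 2 + ‖Q t‖ ^ 2)
          + 1 / (2 * Real.sqrt R) * Gfun k η t * (Nfun R k η t + cτ * Jfun k η t)
              * (η - k * t) ^ 2 * (Z t * (starRingEnd ℂ) (Q t)).re)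
    + cβ * betaDef μ k *
        (k * (η - k * t) * (‖Z t‖ ^ 2 + ‖Q t‖ ^ 2)
          - 1 / (2 * Real.sqrt R) * Gfun k η t * (k * (η - k * t))
              * (Z t * (starRingEnd ℂ) (Q t)).re)

/-- The pointwise dissipation functional `D_k`. -/
def dissip (R cτ cα cβ μ k η : ℝ) (Z Q : ℝ → ℂ) (t : ℝ) : ℝ :=
  μ * pfun k η t * (‖Z t‖ ^ 2 + ‖Q t‖ ^ 2)
    + cτ * (k ^ 2 / pfun k η t) * (‖Z t‖ ^ 2 + ‖Q t‖ ^ 2)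
    + cα * alphaDef μ k * μ * pfun k η t * (η - k * t) ^ 2 * (‖Z t‖ ^ 2 + ‖Q t‖ ^ 2)
    + cτ * cα * alphaDef μ k * (k ^ 2 * (η - k * t) ^ 2 / pfun k η t)
        * (‖Z t‖ ^ 2 + ‖Q t‖ ^ 2)
    + 1 / Real.sqrt R * (|k| ^ 3 / (pfun k η t * Real.sqrt (pfun k η t)))
        * (‖Z t‖ ^ 2 + ‖Q t‖ ^ 2)
    + cα / Real.sqrt R * alphaDef μ k
        * (|k| ^ 3 * (η - k * t) ^ 2 / (pfun k η t * Real.sqrt (pfun k η t)))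
        * (‖Z t‖ ^ 2 + ‖Q t‖ ^ 2)
    + cβ * betaDef μ k * k ^ 2 * (‖Z t‖ ^ 2 + ‖Q t‖ ^ 2)

/-!
Write `x = η - k t`, `S = ‖Z‖² + ‖Q‖²` and `𝓔 = S + (1 / (2√R)) G ⟪Q, Z⟫`, so that the functional is
`𝔍 x² 𝓔`. The weight `1 / (2√R)` is chosen so that the coupling `√R |k| / √p` turns the cross term
into a multiple of `p' / p`; hence `𝓔' = (p' / p) (‖Z‖² - ‖Q‖²) + (1 / (2√R)) G' ⟪Q, Z⟫ - p D` with
`D` the viscous form. In the derivative of `𝔍 x² 𝓔`,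

* `𝔍' = -k² / (2p)` and `𝓔 ≥ (1 - 1 / (2√R)) S` produce the damping on the left-hand side;
* `G' = 2 |k|³ / p^{3/2}` and `|𝔍| ≤ π / 4` produce the `p^{-3/2}` term;
* `(x²)' = p'` joins `x² p' / p`, and `0 ≤ k x 𝔍 ≤ (π / 4) |k| √p` bounds their sum by
  `(π / 4) |k| √p S`, which is the geometric mean on the right-hand side because `β μ = α²`;
* `|D| ≤ 4 max(ν, κ) S` produces the viscous term, since `max(ν, κ) ≤ 16 (R / ε) μ`.
-/

section InnerProductSpace

open scoped InnerProductSpace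

variable {E : Type*} [NormedAddCommGroup E] [InnerProductSpace ℝ E]

lemma two_mul_abs_real_inner_le_sq_add_sq (x y : E) : 2 * |⟪x, y⟫_ℝ| ≤ ‖y‖ ^ 2 + ‖x‖ ^ 2 := by
  linarith [abs_real_inner_le_norm x y, two_mul_le_add_sq ‖x‖ ‖y‖]

lemma abs_sq_norm_sub_add_two_mul_abs_real_inner_le (x y : E) :
    |‖x‖ ^ 2 - ‖y‖ ^ 2| + 2 * |⟪x, y⟫_ℝ| ≤ √2 * (‖y‖ ^ 2 + ‖x‖ ^ 2) := by
  have hCS : ⟪x, y⟫_ℝ ^ 2 ≤ (‖x‖ * ‖y‖) ^ 2 :=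
    sq_le_sq.2 ((abs_real_inner_le_norm x y).trans (le_abs_self _))
  refine le_of_sq_le_sq ?_ (by positivity)
  calc (|‖x‖ ^ 2 - ‖y‖ ^ 2| + 2 * |⟪x, y⟫_ℝ|) ^ 2
      ≤ 2 * (|‖x‖ ^ 2 - ‖y‖ ^ 2| ^ 2 + (2 * |⟪x, y⟫_ℝ|) ^ 2) := add_sq_le
    _ = 2 * ((‖x‖ ^ 2 - ‖y‖ ^ 2) ^ 2 + 4 * ⟪x, y⟫_ℝ ^ 2) := by
        rw [mul_pow, sq_abs, sq_abs]; ring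
    _ ≤ 2 * ((‖x‖ ^ 2 - ‖y‖ ^ 2) ^ 2 + 4 * (‖x‖ * ‖y‖) ^ 2) := by gcongr
    _ = (√2 * (‖y‖ ^ 2 + ‖x‖ ^ 2)) ^ 2 := by
        rw [mul_pow √2, sq_sqrt zero_le_two]; ring

section Damped

variable {Z Q : ℝ → E} {a c m n t : ℝ}

lemma hasDerivAt_sq_norm_add_sq_norm_of_damped (hZ : HasDerivAt Z (a • Z t - c • Q t - m • Z t) t)
    (hQ : HasDerivAt Q (-(a • Q t) + c • Z t - n • Q t) t) :
    HasDerivAt (fun s => ‖Z s‖ ^ 2 + ‖Q s‖ ^ 2)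
      (2 * a * (‖Z t‖ ^ 2 - ‖Q t‖ ^ 2) - 2 * (m * ‖Z t‖ ^ 2 + n * ‖Q t‖ ^ 2)) t := by
  refine (hZ.norm_sq.add hQ.norm_sq).congr_deriv ?_
  simp only [inner_sub_right, inner_add_right, inner_neg_right, real_inner_smul_right,
    real_inner_self_eq_norm_sq, real_inner_comm (Q t) (Z t)]
  ring

lemma hasDerivAt_real_inner_of_damped (hZ : HasDerivAt Z (a • Z t - c • Q t - m • Z t) t)
    (hQ : HasDerivAt Q (-(a • Q t) + c • Z t - n • Q t) t) :
    HasDerivAt (fun s => ⟪Q s, Z s⟫_ℝ)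
      (c * (‖Z t‖ ^ 2 - ‖Q t‖ ^ 2) - (m + n) * ⟪Q t, Z t⟫_ℝ) t := by
  refine (hQ.inner ℝ hZ).congr_deriv ?_
  simp only [inner_sub_right, inner_sub_left, inner_add_left, inner_neg_left,
    real_inner_smul_right, real_inner_smul_left, real_inner_self_eq_norm_sq]
  ring

end Damped

end InnerProductSpace

section Coefficients

variable {k : ℝ}

lemma pfun_nonneg (k η t : ℝ) : 0 ≤ pfun k η t := by
  unfold pfun; positivity

lemma pfun_pos (hk : k ≠ 0) (η t : ℝ) : 0 < pfun k η t := by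
  unfold pfun; positivity

lemma sq_sub_mul_le_pfun (k η t : ℝ) : (η - k * t) ^ 2 ≤ pfun k η t :=
  le_add_of_nonneg_left (sq_nonneg k)

lemma abs_sub_mul_le_sqrt_pfun (k η t : ℝ) : |η - k * t| ≤ √(pfun k η t) :=
  abs_le_sqrt (sq_sub_mul_le_pfun k η t)

lemma hasDerivAt_sub_mul (k η t : ℝ) : HasDerivAt (fun s => η - k * s) (-k) t := by
  simpa using ((hasDerivAt_id t).const_mul k).const_sub η

lemma hasDerivAt_sq_sub_mul (k η t : ℝ) :
    HasDerivAt (fun s => (η - k * s) ^ 2) (pder k η t) t := by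
  refine ((hasDerivAt_sub_mul k η t).pow 2).congr_deriv ?_
  unfold pder; push_cast; ring

lemma hasDerivAt_pfun (k η t : ℝ) : HasDerivAt (pfun k η) (pder k η t) t :=
  (hasDerivAt_sq_sub_mul k η t).const_add (k ^ 2)

lemma hasDerivAt_pder (k η t : ℝ) : HasDerivAt (pder k η) (2 * k ^ 2) t := by
  refine ((hasDerivAt_sub_mul k η t).const_mul (2 * k)).neg.congr_deriv ?_
  ring

lemma hasDerivAt_Gfun (hk : k ≠ 0) (η t : ℝ) :
    HasDerivAt (Gfun k η) (2 * (|k| ^ 3 / (pfun k η t * √(pfun k η t)))) t := by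
  have hp := pfun_pos hk η t
  have hden := ((hasDerivAt_pfun k η t).sqrt hp.ne').const_mul |k|
  refine ((hasDerivAt_pder k η t).div hden (by positivity)).congr_deriv ?_
  have hpder : pder k η t ^ 2 = 4 * |k| ^ 2 * (√(pfun k η t) ^ 2 - |k| ^ 2) := by
    rw [sq_sqrt hp.le, sq_abs, pder, pfun]; ring
  have hpfun : pfun k η t = √(pfun k η t) ^ 2 := (sq_sqrt hp.le).symm
  rw [← sq_abs k]
  generalize √(pfun k η t) = q at *
  rw [hpfun]
  field_simp
  rw [hpder]
  ring

lemma abs_Gfun_le_two (k η t : ℝ) : |Gfun k η t| ≤ 2 := by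
  rw [Gfun, abs_div, abs_of_nonneg (by positivity : 0 ≤ |k| * √(pfun k η t))]
  refine div_le_of_le_mul₀ (by positivity) zero_le_two ?_
  calc |pder k η t| = 2 * (|k| * |η - k * t|) := by
        rw [pder, abs_neg, abs_mul, abs_mul, abs_two, mul_assoc]
    _ ≤ 2 * (|k| * √(pfun k η t)) := by gcongr; exact abs_sub_mul_le_sqrt_pfun k η t

lemma Gfun_mul_coupling {R : ℝ} (hR : 0 < R) (hk : k ≠ 0) (η t : ℝ) :
    1 / (2 * √R) * Gfun k η t * (√R * (|k| / √(pfun k η t)))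
      = 1 / 2 * (pder k η t / pfun k η t) := by
  have hp := pfun_pos hk η t
  rw [Gfun]
  nth_rewrite 3 [← sq_sqrt hp.le]
  field_simp

lemma hasDerivAt_Jfun (hk : k ≠ 0) (η t : ℝ) :
    HasDerivAt (Jfun k η) (-(1 / 2) * (k ^ 2 / pfun k η t)) t := by
  have harg : HasDerivAt (fun s => η / k - s) (-1) t := (hasDerivAt_id' t).const_sub (η / k)
  refine (harg.arctan.const_mul (1 / 2)).congr_deriv ?_
  have hsq : 1 + (η / k - t) ^ 2 = pfun k η t / k ^ 2 := by
    unfold pfun; field_simp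
  rw [hsq]
  field_simp

lemma abs_Jfun_le (k η t : ℝ) : |Jfun k η t| ≤ π / 4 := by
  unfold Jfun
  rw [abs_le]
  constructor <;> linarith [arctan_lt_pi_div_two (η / k - t), neg_pi_div_two_lt_arctan (η / k - t)]

lemma mul_arctan_nonneg (y : ℝ) : 0 ≤ y * arctan y := by
  rcases le_total 0 y with hy | hy
  · exact mul_nonneg hy (arctan_nonneg.2 hy)
  · exact mul_nonneg_of_nonpos_of_nonpos hy (arctan_zero ▸ arctan_mono hy)

lemma mul_Jfun_nonneg (hk : k ≠ 0) (η t : ℝ) : 0 ≤ k * (η - k * t) * Jfun k η t := by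
  have h : k * (η - k * t) * Jfun k η t
      = k ^ 2 / 2 * ((η / k - t) * arctan (η / k - t)) := by
    unfold Jfun; field_simp
  rw [h]
  exact mul_nonneg (by positivity) (mul_arctan_nonneg _)

lemma mul_Jfun_le (k η t : ℝ) :
    k * (η - k * t) * Jfun k η t ≤ π / 4 * (|k| * √(pfun k η t)) :=
  calc k * (η - k * t) * Jfun k η t ≤ |k * (η - k * t) * Jfun k η t| := le_abs_self _
    _ = |k| * |η - k * t| * |Jfun k η t| := by rw [abs_mul, abs_mul]
    _ ≤ |k| * √(pfun k η t) * (π / 4) := by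
        gcongr
        · exact abs_sub_mul_le_sqrt_pfun k η t
        · exact abs_Jfun_le k η t
    _ = π / 4 * (|k| * √(pfun k η t)) := by ring

end Coefficients

section Weights

variable {μ : ℝ}

lemma alphaDef_nonneg (hμ : 0 ≤ μ) (k : ℝ) : 0 ≤ alphaDef μ k := by
  unfold alphaDef; split_ifs <;> positivity

lemma betaDef_mul_eq_alphaDef_sq (hμ : 0 < μ) {k : ℝ} (hk : k ≠ 0) :
    betaDef μ k * μ = alphaDef μ k ^ 2 := by
  have hk_abs := abs_pos.2 hk
  unfold alphaDef betaDef
  split_ifs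
  · rw [inv_mul_cancel₀ hμ.ne', one_pow]
  · rw [mul_right_comm, ← rpow_add_one hμ.ne', mul_pow, ← rpow_mul_natCast hμ.le,
      ← rpow_mul_natCast hk_abs.le]
    norm_num

lemma sqrt_betaDef_mul_sqrt (hμ : 0 < μ) {k p S : ℝ} (hk : k ≠ 0) (hp : 0 ≤ p) (hS : 0 ≤ S) :
    √(betaDef μ k * k ^ 2 * S) * √(μ * p * S) = alphaDef μ k * (|k| * √p * S) := by
  have hα := alphaDef_nonneg hμ.le k
  have hsq : betaDef μ k * k ^ 2 * S * (μ * p * S) = (alphaDef μ k * (|k| * √p * S)) ^ 2 := by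
    rw [mul_pow, mul_pow, mul_pow, sq_abs, sq_sqrt hp, ← betaDef_mul_eq_alphaDef_sq hμ hk]
    ring
  rw [← sqrt_mul' _ (by positivity), hsq, sqrt_sq (by positivity)]

end Weights

section EffectiveDiffusivity

variable {R ε ν κ : ℝ}

lemma one_lt_two_mul_sqrt_of_ratio_le (hε : 0 < ε) (hν : 0 < ν) (hκ : 0 < κ)
    (hratio : max ν κ / min ν κ ≤ 4 * √R - 1 - ε) : 1 < 2 * √R := by
  have hone : 1 ≤ max ν κ / min ν κ := (one_le_div (lt_min hν hκ)).2 min_le_max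
  linarith

lemma min_mul_div_le_muDef (hR : 0 < R) (hν : 0 < ν) (hκ : 0 < κ)
    (hratio : max ν κ / min ν κ ≤ 4 * √R - 1 - ε) :
    min ν κ / (4 * √R) * ε ≤ muDef R ν κ :=
  calc min ν κ / (4 * √R) * ε ≤ min ν κ / (4 * √R) * (4 * √R - 1 - max ν κ / min ν κ) := by
        gcongr; linarith
    _ = muDef R ν κ := by unfold muDef; field_simp

lemma muDef_pos (hR : 0 < R) (hε : 0 < ε) (hν : 0 < ν) (hκ : 0 < κ)
    (hratio : max ν κ / min ν κ ≤ 4 * √R - 1 - ε) : 0 < muDef R ν κ :=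
  lt_of_lt_of_le (by positivity) (min_mul_div_le_muDef hR hν hκ hratio)

lemma max_le_mul_muDef (hR : 0 < R) (hε : 0 < ε) (hν : 0 < ν) (hκ : 0 < κ)
    (hratio : max ν κ / min ν κ ≤ 4 * √R - 1 - ε) :
    max ν κ ≤ 16 * (R / ε) * muDef R ν κ := by
  have hmin := lt_min hν hκ
  calc max ν κ ≤ (4 * √R - 1 - ε) * min ν κ := (div_le_iff₀ hmin).1 hratio
    _ ≤ 4 * √R * min ν κ := by gcongr; linarith
    _ = 16 * (√R ^ 2 / ε) * (min ν κ / (4 * √R) * ε) := by field_simp; norm_num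
    _ = 16 * (R / ε) * (min ν κ / (4 * √R) * ε) := by rw [sq_sqrt hR.le]
    _ ≤ 16 * (R / ε) * muDef R ν κ := by
        gcongr; exact min_mul_div_le_muDef hR hν hκ hratio

end EffectiveDiffusivity

section Energy

open scoped InnerProductSpace

variable {E : Type*} [NormedAddCommGroup E] [InnerProductSpace ℝ E]

/-- The linearized symmetrized Boussinesq–Couette system at the single time `t`, for unknowns with
values in a real inner product space; `IsSol` is the case `E = ℂ` at all times `t ≥ 0`. -/
structure IsSolAt (R ν κ k η : ℝ) (Z Q : ℝ → E) (t : ℝ) : Prop where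
  hasDerivAt_fst : HasDerivAt Z (((1 / 4) * (pder k η t / pfun k η t)) • Z t
    - (√R * (|k| / √(pfun k η t))) • Q t - (ν * pfun k η t) • Z t) t
  hasDerivAt_snd : HasDerivAt Q (-(((1 / 4) * (pder k η t / pfun k η t)) • Q t)
    + (√R * (|k| / √(pfun k η t))) • Z t - (κ * pfun k η t) • Q t) t

lemma IsSol.isSolAt {R ν κ k η t : ℝ} {Z Q : ℝ → ℂ} (h : IsSol R ν κ k η Z Q) (ht : 0 ≤ t) :
    IsSolAt R ν κ k η Z Q t where
  hasDerivAt_fst := by simpa only [Complex.real_smul] using (h t ht).1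
  hasDerivAt_snd := by simpa only [Complex.real_smul, neg_mul] using (h t ht).2

/-- The cross term `(1 / (2√R)) G(t) ⟪q, z⟫` of the energy, which for `E = ℂ` is
`(1 / (2√R)) G(t) Re(z conj q)`. -/
def crossEnergy (R k η t : ℝ) (z q : E) : ℝ :=
  1 / (2 * √R) * Gfun k η t * ⟪q, z⟫_ℝ

/-- The energy density `‖z‖² + ‖q‖² + (1 / (2√R)) G(t) ⟪q, z⟫` adapted to the coupling of the
symmetrized system. -/
def mixedEnergy (R k η t : ℝ) (z q : E) : ℝ :=
  ‖z‖ ^ 2 + ‖q‖ ^ 2 + crossEnergy R k η t z q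

/-- The quadratic form `2ν‖z‖² + 2κ‖q‖² + (ν + κ) (1 / (2√R)) G(t) ⟪q, z⟫` by which the viscous
terms dissipate `mixedEnergy`, up to the factor `p(t)`. -/
def viscousForm (R ν κ k η t : ℝ) (z q : E) : ℝ :=
  2 * ν * ‖z‖ ^ 2 + 2 * κ * ‖q‖ ^ 2 + (ν + κ) * crossEnergy R k η t z q

section Bounds

variable {R : ℝ}

lemma abs_crossEnergy_le (R k η t : ℝ) (z q : E) :
    |crossEnergy R k η t z q| ≤ 1 / √R * |⟪q, z⟫_ℝ| :=
  calc |crossEnergy R k η t z q|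
      = 1 / (2 * √R) * |Gfun k η t| * |⟪q, z⟫_ℝ| := by
        rw [crossEnergy, abs_mul, abs_mul, abs_of_nonneg (by positivity : 0 ≤ 1 / (2 * √R))]
    _ ≤ 1 / (2 * √R) * 2 * |⟪q, z⟫_ℝ| := by gcongr; exact abs_Gfun_le_two k η t
    _ = 1 / √R * |⟪q, z⟫_ℝ| := by ring

lemma abs_crossEnergy_le_mul_sq_add_sq (R k η t : ℝ) (z q : E) :
    |crossEnergy R k η t z q| ≤ 1 / (2 * √R) * (‖z‖ ^ 2 + ‖q‖ ^ 2) :=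
  calc |crossEnergy R k η t z q| ≤ 1 / √R * |⟪q, z⟫_ℝ| := abs_crossEnergy_le R k η t z q
    _ = 1 / (2 * √R) * (2 * |⟪q, z⟫_ℝ|) := by ring
    _ ≤ 1 / (2 * √R) * (‖z‖ ^ 2 + ‖q‖ ^ 2) := by
        gcongr; exact two_mul_abs_real_inner_le_sq_add_sq q z

lemma mul_sq_add_sq_le_mixedEnergy (R k η t : ℝ) (z q : E) :
    (1 - 1 / (2 * √R)) * (‖z‖ ^ 2 + ‖q‖ ^ 2) ≤ mixedEnergy R k η t z q := by
  unfold mixedEnergy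
  linarith [neg_le_of_abs_le (abs_crossEnergy_le_mul_sq_add_sq R k η t z q)]

lemma neg_mixedEnergy_add_mul_le (hR : 1 ≤ 2 * √R) {y : ℝ} (hy₀ : 0 ≤ y) (hy₁ : y ≤ 1)
    (k η t : ℝ) (z q : E) :
    -mixedEnergy R k η t z q + y * (‖q‖ ^ 2 - ‖z‖ ^ 2) ≤ 1 / 2 * (‖z‖ ^ 2 + ‖q‖ ^ 2) := by
  have hcross : |crossEnergy R k η t z q| ≤ 2 * |⟪q, z⟫_ℝ| := by
    refine (abs_crossEnergy_le R k η t z q).trans ?_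
    gcongr
    rw [div_le_iff₀ (by linarith)]
    exact hR
  have hdiff : y * (‖q‖ ^ 2 - ‖z‖ ^ 2) ≤ |‖q‖ ^ 2 - ‖z‖ ^ 2| :=
    calc y * (‖q‖ ^ 2 - ‖z‖ ^ 2) ≤ y * |‖q‖ ^ 2 - ‖z‖ ^ 2| := by gcongr; exact le_abs_self _
      _ ≤ |‖q‖ ^ 2 - ‖z‖ ^ 2| := mul_le_of_le_one_left (abs_nonneg _) hy₁
  have hsqrt_two : √2 * (‖z‖ ^ 2 + ‖q‖ ^ 2) ≤ 3 / 2 * (‖z‖ ^ 2 + ‖q‖ ^ 2) := by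
    gcongr
    exact sqrt_le_iff.2 ⟨by norm_num, by norm_num⟩
  unfold mixedEnergy
  linarith [neg_le_of_abs_le hcross, abs_sq_norm_sub_add_two_mul_abs_real_inner_le q z]

lemma abs_viscousForm_le (hR : 1 ≤ 2 * √R) {ν κ : ℝ} (hν : 0 ≤ ν) (hκ : 0 ≤ κ)
    (k η t : ℝ) (z q : E) :
    |viscousForm R ν κ k η t z q| ≤ 4 * max ν κ * (‖z‖ ^ 2 + ‖q‖ ^ 2) := by
  have hcross : |crossEnergy R k η t z q| ≤ ‖z‖ ^ 2 + ‖q‖ ^ 2 :=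
    (abs_crossEnergy_le_mul_sq_add_sq R k η t z q).trans <|
      mul_le_of_le_one_left (by positivity) <| div_le_one_of_le₀ hR (by positivity)
  have hνmax := le_max_left ν κ
  have hκmax := le_max_right ν κ
  calc |viscousForm R ν κ k η t z q|
      ≤ 2 * ν * ‖z‖ ^ 2 + 2 * κ * ‖q‖ ^ 2 + (ν + κ) * |crossEnergy R k η t z q| := by
        refine (abs_add_le _ _).trans_eq ?_
        rw [abs_mul, abs_of_nonneg (add_nonneg hν hκ), abs_of_nonneg (by positivity)]
    _ ≤ 2 * max ν κ * ‖z‖ ^ 2 + 2 * max ν κ * ‖q‖ ^ 2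
          + (max ν κ + max ν κ) * (‖z‖ ^ 2 + ‖q‖ ^ 2) := by gcongr
    _ = 4 * max ν κ * (‖z‖ ^ 2 + ‖q‖ ^ 2) := by ring

lemma Jfun_mul_real_inner_le (k η t : ℝ) (z q : E) :
    Jfun k η t * ⟪q, z⟫_ℝ ≤ π / 8 * (‖z‖ ^ 2 + ‖q‖ ^ 2) :=
  calc Jfun k η t * ⟪q, z⟫_ℝ ≤ |Jfun k η t| * |⟪q, z⟫_ℝ| :=
        (le_abs_self _).trans_eq (abs_mul _ _)
    _ ≤ π / 4 * |⟪q, z⟫_ℝ| := by gcongr; exact abs_Jfun_le k η t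
    _ = π / 8 * (2 * |⟪q, z⟫_ℝ|) := by ring
    _ ≤ π / 8 * (‖z‖ ^ 2 + ‖q‖ ^ 2) := by
        gcongr; exact two_mul_abs_real_inner_le_sq_add_sq q z

lemma mul_neg_mixedEnergy_add_mul_le (hR : 1 ≤ 2 * √R) {k : ℝ} (hk : k ≠ 0) (η t : ℝ)
    (z q : E) :
    2 * (k * (η - k * t) * Jfun k η t)
        * (-mixedEnergy R k η t z q + (η - k * t) ^ 2 / pfun k η t * (‖q‖ ^ 2 - ‖z‖ ^ 2))
      ≤ π / 4 * (|k| * √(pfun k η t) * (‖z‖ ^ 2 + ‖q‖ ^ 2)) := by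
  have hp := pfun_nonneg k η t
  have hJ := mul_Jfun_nonneg hk η t
  have hbracket := neg_mixedEnergy_add_mul_le hR (by positivity)
    (div_le_one_of_le₀ (sq_sub_mul_le_pfun k η t) hp) k η t z q
  grw [hbracket, mul_Jfun_le k η t]
  exact le_of_eq (by ring)

lemma neg_Jfun_mul_viscousForm_le (hR : 1 ≤ 2 * √R) {ν κ : ℝ} (hν : 0 ≤ ν) (hκ : 0 ≤ κ)
    (k η t : ℝ) (z q : E) :
    -(Jfun k η t * viscousForm R ν κ k η t z q) ≤ π * max ν κ * (‖z‖ ^ 2 + ‖q‖ ^ 2) :=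
  calc -(Jfun k η t * viscousForm R ν κ k η t z q)
      ≤ |Jfun k η t| * |viscousForm R ν κ k η t z q| := (neg_le_abs _).trans_eq (abs_mul _ _)
    _ ≤ π / 4 * (4 * max ν κ * (‖z‖ ^ 2 + ‖q‖ ^ 2)) := by
        gcongr
        · exact abs_Jfun_le k η t
        · exact abs_viscousForm_le hR hν hκ k η t z q
    _ = π * max ν κ * (‖z‖ ^ 2 + ‖q‖ ^ 2) := by ring

end Bounds

section Derivative

variable {R ν κ k η t : ℝ} {Z Q : ℝ → E}

lemma hasDerivAt_mixedEnergy (hR : 0 < R) (hk : k ≠ 0) (hsol : IsSolAt R ν κ k η Z Q t) :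
    HasDerivAt (fun s => mixedEnergy R k η s (Z s) (Q s))
      (pder k η t / pfun k η t * (‖Z t‖ ^ 2 - ‖Q t‖ ^ 2)
        + 1 / √R * (|k| ^ 3 / (pfun k η t * √(pfun k η t))) * ⟪Q t, Z t⟫_ℝ
        - pfun k η t * viscousForm R ν κ k η t (Z t) (Q t)) t := by
  obtain ⟨hZ, hQ⟩ := hsol
  refine ((hasDerivAt_sq_norm_add_sq_norm_of_damped hZ hQ).add
    (((hasDerivAt_Gfun hk η t).const_mul (1 / (2 * √R))).mul
      (hasDerivAt_real_inner_of_damped hZ hQ))).congr_deriv ?_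
  unfold viscousForm crossEnergy
  linear_combination (‖Z t‖ ^ 2 - ‖Q t‖ ^ 2) * Gfun_mul_coupling hR hk η t

lemma hasDerivAt_Jfun_mul_mixedEnergy (hR : 0 < R) (hk : k ≠ 0)
    (hsol : IsSolAt R ν κ k η Z Q t) :
    HasDerivAt (fun s => Jfun k η s * (η - k * s) ^ 2 * mixedEnergy R k η s (Z s) (Q s))
      (-(1 / 2) * (k ^ 2 * (η - k * t) ^ 2 / pfun k η t) * mixedEnergy R k η t (Z t) (Q t)
        + 1 / √R * (|k| ^ 3 * (η - k * t) ^ 2 / (pfun k η t * √(pfun k η t)))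
          * (Jfun k η t * ⟪Q t, Z t⟫_ℝ)
        + 2 * (k * (η - k * t) * Jfun k η t)
          * (-mixedEnergy R k η t (Z t) (Q t)
            + (η - k * t) ^ 2 / pfun k η t * (‖Q t‖ ^ 2 - ‖Z t‖ ^ 2))
        - pfun k η t * (η - k * t) ^ 2
          * (Jfun k η t * viscousForm R ν κ k η t (Z t) (Q t))) t := by
  refine (((hasDerivAt_Jfun hk η t).mul (hasDerivAt_sq_sub_mul k η t)).mul
    (hasDerivAt_mixedEnergy hR hk hsol)).congr_deriv ?_
  simp only [Pi.mul_apply, pder]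
  ring

theorem deriv_Jfun_mul_mixedEnergy_add_le (hR : 1 ≤ 2 * √R) (hν : 0 ≤ ν) (hκ : 0 ≤ κ)
    (hk : k ≠ 0) (hsol : IsSolAt R ν κ k η Z Q t) :
    deriv (fun s => Jfun k η s * (η - k * s) ^ 2 * mixedEnergy R k η s (Z s) (Q s)) t
        + (1 / 2 - 1 / (4 * √R)) * (k ^ 2 * (η - k * t) ^ 2 / pfun k η t)
          * (‖Z t‖ ^ 2 + ‖Q t‖ ^ 2)
      ≤ π * max ν κ * pfun k η t * (η - k * t) ^ 2 * (‖Z t‖ ^ 2 + ‖Q t‖ ^ 2)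
        + π / (8 * √R) * (|k| ^ 3 * (η - k * t) ^ 2 / (pfun k η t * √(pfun k η t)))
          * (‖Z t‖ ^ 2 + ‖Q t‖ ^ 2)
        + π / 4 * (|k| * √(pfun k η t) * (‖Z t‖ ^ 2 + ‖Q t‖ ^ 2)) := by
  have hp := pfun_pos hk η t
  have hR_pos : 0 < R := sqrt_pos.1 (by linarith)
  rw [(hasDerivAt_Jfun_mul_mixedEnergy hR_pos hk hsol).deriv]
  have hdamping := mul_le_mul_of_nonneg_left (mul_sq_add_sq_le_mixedEnergy R k η t (Z t) (Q t))
    (by positivity : 0 ≤ 1 / 2 * (k ^ 2 * (η - k * t) ^ 2 / pfun k η t))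
  have hcross := mul_le_mul_of_nonneg_left (Jfun_mul_real_inner_le k η t (Z t) (Q t))
    (by positivity :
      0 ≤ 1 / √R * (|k| ^ 3 * (η - k * t) ^ 2 / (pfun k η t * √(pfun k η t))))
  have htransport := mul_neg_mixedEnergy_add_mul_le hR hk η t (Z t) (Q t)
  have hdiffusion := mul_le_mul_of_nonneg_left
    (neg_Jfun_mul_viscousForm_le hR hν hκ k η t (Z t) (Q t))
    (by positivity : 0 ≤ pfun k η t * (η - k * t) ^ 2)
  linear_combination hdamping + hcross + htransport + hdiffusion

theorem stmt6_general {ε F' : ℝ} (hε : 0 < ε) (hν : 0 < ν) (hκ : 0 < κ)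
    (hratio : max ν κ / min ν κ ≤ 4 * √R - 1 - ε) (hk : k ≠ 0)
    (hsol : IsSolAt R ν κ k η Z Q t)
    (hF : HasDerivAt (fun s =>
        Jfun k η s * (η - k * s) ^ 2 * (‖Z s‖ ^ 2 + ‖Q s‖ ^ 2)
          + 1 / (2 * √R) * Gfun k η s * Jfun k η s * (η - k * s) ^ 2 * ⟪Q s, Z s⟫_ℝ) F' t) :
    alphaDef (muDef R ν κ) k * F'
        + alphaDef (muDef R ν κ) k * (1 / 2 - 1 / (4 * √R))
            * (k ^ 2 * (η - k * t) ^ 2 / pfun k η t) * (‖Z t‖ ^ 2 + ‖Q t‖ ^ 2)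
      ≤ 16 * π * (R / ε) * alphaDef (muDef R ν κ) k * muDef R ν κ * pfun k η t
            * (η - k * t) ^ 2 * (‖Z t‖ ^ 2 + ‖Q t‖ ^ 2)
        + π / (8 * √R) * alphaDef (muDef R ν κ) k
            * (|k| ^ 3 * (η - k * t) ^ 2 / (pfun k η t * √(pfun k η t)))
            * (‖Z t‖ ^ 2 + ‖Q t‖ ^ 2)
        + π / 4 * √(betaDef (muDef R ν κ) k * k ^ 2 * (‖Z t‖ ^ 2 + ‖Q t‖ ^ 2))
            * √(muDef R ν κ * pfun k η t * (‖Z t‖ ^ 2 + ‖Q t‖ ^ 2)) := by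
  have hR := one_lt_two_mul_sqrt_of_ratio_le hε hν hκ hratio
  have hR_pos : 0 < R := sqrt_pos.1 (by linarith)
  have hμ := muDef_pos hR_pos hε hν hκ hratio
  have hα := alphaDef_nonneg hμ.le k
  have hp := pfun_nonneg k η t
  have hF_deriv : F' =
      deriv (fun s => Jfun k η s * (η - k * s) ^ 2 * mixedEnergy R k η s (Z s) (Q s)) t := by
    rw [← hF.deriv]
    congr with s
    unfold mixedEnergy crossEnergy
    ring
  have hmain := deriv_Jfun_mul_mixedEnergy_add_le hR.le hν.le hκ.le hk hsol
  rw [← hF_deriv] at hmain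
  grw [max_le_mul_muDef hR_pos hε hν hκ hratio] at hmain
  rw [mul_assoc (π / 4), sqrt_betaDef_mul_sqrt hμ hk hp (by positivity)]
  linear_combination alphaDef (muDef R ν κ) k * hmain

end Derivative

end Energy

/-- Lemma, τα-estimate: for every solution `(Z,Q)` of the
linearized symmetrized system and every `t ≥ 0`,
`α·(d/dt)[𝔍·(η−kt)²·(|Z|²+|Q|²) + (1/(2√R))·G·𝔍·(η−kt)²·Re(Z·conj Q)]
 + α·(1/2 − 1/(4√R))·k²·(η−kt)²·p⁻¹·(|Z|²+|Q|²)
 ≤ 16π·(R/ε)·α·μ·p·(η−kt)²·(|Z|²+|Q|²) + (π/(8√R))·α·|k|³·(η−kt)²·p^{−3/2}·(|Z|²+|Q|²)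
   + (π/4)·(β·k²·(|Z|²+|Q|²))^{1/2}·(μ·p·(|Z|²+|Q|²))^{1/2}`. -/
theorem stmt6 (R ε ν κ k η : ℝ) (hR : 1 / 4 < R) (hε : ε ∈ Set.Ioo (0 : ℝ) (1 / 2))
    (hν : ν ∈ Set.Ioo (0 : ℝ) 1) (hκ : κ ∈ Set.Ioo (0 : ℝ) 1)
    (hratio : max ν κ / min ν κ ≤ 4 * Real.sqrt R - 1 - ε) (hk : k ≠ 0)
    (Z Q : ℝ → ℂ) (hsol : IsSol R ν κ k η Z Q) :
    ∀ t : ℝ, 0 ≤ t → ∀ F' : ℝ,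
      HasDerivAt (fun s =>
          Jfun k η s * (η - k * s) ^ 2 * (‖Z s‖ ^ 2 + ‖Q s‖ ^ 2)
            + 1 / (2 * Real.sqrt R) * Gfun k η s * Jfun k η s * (η - k * s) ^ 2
                * (Z s * (starRingEnd ℂ) (Q s)).re) F' t →
      alphaDef (muDef R ν κ) k * F'
          + alphaDef (muDef R ν κ) k * (1 / 2 - 1 / (4 * Real.sqrt R))
              * (k ^ 2 * (η - k * t) ^ 2 / pfun k η t) * (‖Z t‖ ^ 2 + ‖Q t‖ ^ 2)
        ≤ 16 * π * (R / ε) * alphaDef (muDef R ν κ) k * muDef R ν κ * pfun k η t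
              * (η - k * t) ^ 2 * (‖Z t‖ ^ 2 + ‖Q t‖ ^ 2)
          + π / (8 * Real.sqrt R) * alphaDef (muDef R ν κ) k
              * (|k| ^ 3 * (η - k * t) ^ 2 / (pfun k η t * Real.sqrt (pfun k η t)))
              * (‖Z t‖ ^ 2 + ‖Q t‖ ^ 2)
          + π / 4 * Real.sqrt (betaDef (muDef R ν κ) k * k ^ 2 * (‖Z t‖ ^ 2 + ‖Q t‖ ^ 2))
              * Real.sqrt (muDef R ν κ * pfun k η t * (‖Z t‖ ^ 2 + ‖Q t‖ ^ 2)) := by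
  intro t ht F' hF
  exact stmt6_general hε.1 hν.1 hκ.1 hratio hk (hsol.isSolAt ht)
    (by simpa only [Complex.inner] using hF)
end
end

section
/- Let c, C, μ, δ be positive real numbers. Suppose 𝔈 : [0,∞) → [0,∞) is differentiable, 𝔇 : [0,∞) → [0,∞) is continuous, and for every t ≥ 0 the differential inequality 𝔈′(t) ≤ −4c·𝔇(t) + μ^{−1/2−δ}·C^{1/2}·𝔈(t)^{1/2}·𝔇(t) holds. If 𝔈(0) ≤ c²·μ^{1+2δ}·C^{−1}, then for every t ≥ 0 one has 𝔈(t) + 2c·∫₀ᵗ 𝔇(s) ds ≤ 𝔈(0); in particular 𝔈(t) ≤ c²·μ^{1+2δ}·C^{−1} for all t ≥ 0. -/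
open Real MeasureTheory

/-!
As long as the energy stays below a level `m` at which the damping still dominates the nonlinear
interaction, it cannot increase; starting strictly below `m`, it therefore never reaches `m` and
never exceeds its initial value. The damping coefficient is then at least its initial value at all
times, and integrating the differential inequality gives the energy bound. For the interaction
`μ ^ (-1/2 - δ) * √C * √y`, the level at which it equals a damping `κ` is
`κ ^ 2 * μ ^ (1 + 2 * δ) * C⁻¹`.
-/

section Bootstrap

variable {a b m : ℝ}

theorem image_le_left_of_deriv_right_nonpos_of_lt {f f' : ℝ → ℝ}
    (hf : ContinuousOn f (Set.Icc a b))
    (hf' : ∀ x ∈ Set.Ico a b, HasDerivWithinAt f (f' x) (Set.Ici x) x) (ham : f a < m)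
    (hnonpos : ∀ x ∈ Set.Ico a b, f x < m → f' x ≤ 0) {x : ℝ} (hx : x ∈ Set.Icc a b) :
    f x ≤ f a := by
  by_contra! hax
  have hab : a < b := (hx.1.lt_of_ne (by rintro rfl; exact hax.false)).trans_le hx.2
  obtain ⟨r, har, hr⟩ := exists_between (lt_min ham hax)
  obtain ⟨hrm, hrx⟩ := lt_min_iff.1 hr
  -- A strictly increasing barrier from `f a` to `r`: `f` would cross it with nonpositive slope.
  set ε := (r - f a) / (b - a)
  have hε : 0 < ε := div_pos (sub_pos.2 har) (sub_pos.2 hab)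
  have hbarrier_le : ∀ y ≤ b, f a + ε * (y - a) ≤ r := fun y hy =>
    calc f a + ε * (y - a) ≤ f a + ε * (b - a) := by gcongr
      _ = r := by rw [div_mul_cancel₀ _ (sub_pos.2 hab).ne', add_sub_cancel]
  have hbarrier_deriv (y : ℝ) : HasDerivAt (fun y => f a + ε * (y - a)) ε y := by
    simpa using (((hasDerivAt_id y).sub_const a).const_mul ε).const_add (f a)
  have hcross : ∀ y ∈ Set.Ico a b, f y = f a + ε * (y - a) → f' y < ε := fun y hy hfy =>
    (hnonpos y hy (hfy ▸ (hbarrier_le y hy.2.le).trans_lt hrm)).trans_lt hε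
  have hfx : f x ≤ f a + ε * (x - a) :=
    image_le_of_deriv_right_lt_deriv_boundary hf hf' (by simp) hbarrier_deriv hcross hx
  exact (hfx.trans (hbarrier_le x hx.2)).not_gt hrx

theorem add_mul_integral_le_of_deriv_right_le_neg_mul {E E' D g : ℝ → ℝ} {s : Set ℝ}
    (hab : a ≤ b) (hg : AntitoneOn g s) (hEs : Set.MapsTo E (Set.Icc a b) s)
    (hE : ContinuousOn E (Set.Icc a b))
    (hE' : ∀ t ∈ Set.Ico a b, HasDerivWithinAt E (E' t) (Set.Ici t) t)
    (hD : IntegrableOn D (Set.Icc a b)) (hD_nonneg : ∀ t ∈ Set.Ico a b, 0 ≤ D t)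
    (hle : ∀ t ∈ Set.Ico a b, E' t ≤ -g (E t) * D t)
    (hms : m ∈ s) (hEm : E a < m) (hgm : 0 ≤ g m) :
    E b + g (E a) * ∫ t in a..b, D t ≤ E a := by
  have hE'_nonpos : ∀ t ∈ Set.Ico a b, E t < m → E' t ≤ 0 := fun t ht hEt =>
    have hgE : 0 ≤ g (E t) := hgm.trans (hg (hEs (Set.Ico_subset_Icc_self ht)) hms hEt.le)
    (hle t ht).trans (mul_nonpos_of_nonpos_of_nonneg (neg_nonpos.2 hgE) (hD_nonneg t ht))
  have hE'_le : ∀ t ∈ Set.Ico a b, E' t ≤ -g (E a) * D t := fun t ht => by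
    have ht' := Set.Ico_subset_Icc_self ht
    have hEt : E t ≤ E a := image_le_left_of_deriv_right_nonpos_of_lt hE hE' hEm hE'_nonpos ht'
    have hgE : g (E a) ≤ g (E t) := hg (hEs ht') (hEs (Set.left_mem_Icc.2 hab)) hEt
    exact (hle t ht).trans (mul_le_mul_of_nonneg_right (neg_le_neg hgE) (hD_nonneg t ht))
  have hint : E b - E a ≤ ∫ t in a..b, -g (E a) * D t :=
    intervalIntegral.sub_le_integral_of_hasDeriv_right_of_le hab hE
      (fun t ht => (hE' t (Set.Ioo_subset_Ico_self ht)).Ioi_of_Ici) (hD.const_mul _)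
      (fun t ht => hE'_le t (Set.Ioo_subset_Ico_self ht))
  rw [intervalIntegral.integral_const_mul] at hint
  linarith

end Bootstrap

theorem rpow_mul_sqrt_mul_sqrt_sq_mul_rpow_mul_inv {κ C μ : ℝ} (δ : ℝ) (hκ : 0 ≤ κ) (hC : 0 < C)
    (hμ : 0 < μ) :
    μ ^ (-(1 / 2 : ℝ) - δ) * √C * √(κ ^ 2 * μ ^ ((1 : ℝ) + 2 * δ) * C⁻¹) = κ := by
  have hμ_sqrt : √(μ ^ ((1 : ℝ) + 2 * δ)) = μ ^ (1 / 2 + δ) := by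
    rw [sqrt_eq_rpow, ← rpow_mul hμ.le]
    ring_nf
  have hμ_cancel : μ ^ (-(1 / 2 : ℝ) - δ) * μ ^ (1 / 2 + δ) = 1 := by
    rw [← rpow_add hμ, show -(1 / 2 : ℝ) - δ + (1 / 2 + δ) = 0 by ring, rpow_zero]
  have hC_cancel : √C * (√C)⁻¹ = 1 := mul_inv_cancel₀ (sqrt_pos.2 hC).ne'
  rw [sqrt_mul (by positivity), sqrt_mul (sq_nonneg κ), sqrt_sq hκ, hμ_sqrt, sqrt_inv]
  linear_combination κ * (√C * (√C)⁻¹) * hμ_cancel + κ * hC_cancel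

theorem stmt10_general (c C μ δ : ℝ) (hc : 0 < c) (hC : 0 < C) (hμ : 0 < μ) (E D E' : ℝ → ℝ)
    (hEnn : ∀ t : ℝ, 0 ≤ t → 0 ≤ E t)
    (hDnn : ∀ t : ℝ, 0 ≤ t → 0 ≤ D t)
    (hDint : LocallyIntegrableOn D (Set.Ici (0 : ℝ)))
    (hEcont : ContinuousOn E (Set.Ici (0 : ℝ)))
    (hEderiv : ∀ t : ℝ, 0 ≤ t → HasDerivWithinAt E (E' t) (Set.Ici t) t)
    (hineq : ∀ t : ℝ, 0 ≤ t →
      E' t ≤ -(4 * c) * D t + μ ^ (-(1 / 2 : ℝ) - δ) * √C * √(E t) * D t)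
    (hinit : E 0 ≤ (2 * c) ^ 2 * μ ^ ((1 : ℝ) + 2 * δ) * C⁻¹) (t : ℝ) (ht : 0 ≤ t) :
    E t + 2 * c * ∫ s in (0 : ℝ)..t, D s ≤ E 0 ∧ E t ≤ E 0 := by
  set A := μ ^ (-(1 / 2 : ℝ) - δ) * √C
  set M : ℝ → ℝ := fun κ => κ ^ 2 * μ ^ ((1 : ℝ) + 2 * δ) * C⁻¹
  have hA : 0 ≤ A := by positivity
  have hAM {κ : ℝ} (hκ : 0 ≤ κ) : A * √(M κ) = κ :=
    rpow_mul_sqrt_mul_sqrt_sq_mul_rpow_mul_inv δ hκ hC hμ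
  have hM : M (2 * c) < M (4 * c) := by dsimp only [M]; gcongr; norm_num
  have hanti : AntitoneOn (fun y => 4 * c - A * √y) (Set.Ici 0) := fun x _ y _ hxy => by
    dsimp only; gcongr
  have hIcc : Set.Icc 0 t ⊆ Set.Ici 0 := Set.Icc_subset_Ici_self
  have hD_integral : 0 ≤ ∫ s in (0 : ℝ)..t, D s :=
    intervalIntegral.integral_nonneg ht fun s hs => hDnn s hs.1
  have henergy : E t + (4 * c - A * √(E 0)) * ∫ s in (0 : ℝ)..t, D s ≤ E 0 :=
    add_mul_integral_le_of_deriv_right_le_neg_mul ht hanti (fun s hs => hEnn s hs.1)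
      (hEcont.mono hIcc) (fun s hs => hEderiv s hs.1)
      (hDint.integrableOn_compact_subset hIcc isCompact_Icc) (fun s hs => hDnn s hs.1)
      (fun s hs => (hineq s hs.1).trans_eq (by ring)) (m := M (4 * c))
      (Set.mem_Ici.2 (by positivity)) (hinit.trans_lt hM)
      (sub_nonneg.2 (hAM (by positivity)).le)
  have hrate : 2 * c ≤ 4 * c - A * √(E 0) := by
    have : A * √(E 0) ≤ 2 * c :=
      (mul_le_mul_of_nonneg_left (sqrt_le_sqrt hinit) hA).trans_eq (hAM (by positivity))
    linarith
  have hdecay : E t + 2 * c * ∫ s in (0 : ℝ)..t, D s ≤ E 0 := le_trans (by gcongr) henergy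
  exact ⟨hdecay, le_of_add_le_of_nonneg_left hdecay (by positivity)⟩

/-- abstract bootstrap argument: if `𝔈` is differentiable and
nonnegative on `[0,∞)`, `𝔇` is continuous and nonnegative on `[0,∞)`,
`𝔈′(t) ≤ −4c·𝔇(t) + μ^{−1/2−δ}·C^{1/2}·𝔈(t)^{1/2}·𝔇(t)` for all `t ≥ 0`, and
`𝔈(0) ≤ c²·μ^{1+2δ}·C⁻¹`, then `𝔈(t) + 2c·∫₀ᵗ 𝔇 ≤ 𝔈(0)` and in particular
`𝔈(t) ≤ c²·μ^{1+2δ}·C⁻¹` for all `t ≥ 0`. -/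
theorem stmt10 (c C μ δ : ℝ) (hc : 0 < c) (hC : 0 < C) (hμ : 0 < μ) (hδ : 0 < δ)
    (E D E' : ℝ → ℝ)
    (hEnn : ∀ t : ℝ, 0 ≤ t → 0 ≤ E t)
    (hDnn : ∀ t : ℝ, 0 ≤ t → 0 ≤ D t)
    (hDcont : ContinuousOn D (Set.Ici (0 : ℝ)))
    (hEderiv : ∀ t : ℝ, 0 ≤ t → HasDerivAt E (E' t) t)
    (hineq : ∀ t : ℝ, 0 ≤ t →
      E' t ≤ -(4 * c) * D t
        + μ ^ (-(1 / 2 : ℝ) - δ) * Real.sqrt C * Real.sqrt (E t) * D t)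
    (hinit : E 0 ≤ c ^ 2 * μ ^ ((1 : ℝ) + 2 * δ) * C⁻¹) :
    ∀ t : ℝ, 0 ≤ t →
      E t + 2 * c * ∫ s in (0 : ℝ)..t, D s ≤ E 0 ∧
      E t ≤ c ^ 2 * μ ^ ((1 : ℝ) + 2 * δ) * C⁻¹ :=
  fun t ht => (stmt10_general c C μ δ hc hC hμ E D E' hEnn hDnn
    (hDcont.locallyIntegrableOn measurableSet_Ici)
    (fun s hs => (hEderiv s hs).continuousAt.continuousWithinAt)
    (fun s hs => (hEderiv s hs).hasDerivWithinAt) hineq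
    (hinit.trans (by gcongr; linarith)) t ht).imp_right (le_trans · hinit)
end

section
/- There exists a constant C depending only on m and δ such that for every measurable Z : ℝ² → ℂ the following two estimates hold (with both sides possibly infinite): (i) ‖⟨k⟩^{−1/2}·p^{−1/4}·Z‖_{L¹(ℝ²)} ≤ C·‖⟨k⟩^m·min(|k|^{1/4},1)·p^{−1/4}·Z‖_{L²_k L¹_η} ≤ C·( E + μ^{−δ}·D_γ^{δ}·E^{1−2δ} ); (ii) ‖⟨k⟩^m·A(k)·|η − kt|^{1/2}·Z‖_{L²_k L¹_η} ≤ C·( E + μ^{−δ}·D_α^{δ}·E^{1−2δ} ). -/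
open MeasureTheory Real
open scoped ENNReal NNReal

noncomputable section

/-- The Japanese bracket `⟨k⟩ = (1+k²)^{1/2}`. -/
def jap (k : ℝ) : ℝ := Real.sqrt (1 + k ^ 2)

/-- The moving-frame symbol `p(k,η) = k² + (η − kt)²`. -/
def pw (t k η : ℝ) : ℝ := k ^ 2 + (η - k * t) ^ 2

/-- The weight `A(k)`. -/
def Aw (μ k : ℝ) : ℝ :=
  if |k| < μ then 1 else μ ^ ((1 : ℝ) / 3) * |k| ^ (-(1 : ℝ) / 3)

/-- The weight `B(k)`. -/
def Bw (μ k : ℝ) : ℝ :=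
  if |k| < μ then μ ^ (-(1 : ℝ) / 2) else μ ^ ((1 : ℝ) / 6) * |k| ^ (-(2 : ℝ) / 3)

/-- Weighted `L¹(ℝ²)` norm `‖w·Z‖_{L¹}` (iterated, value in `[0,∞]`). -/
def L1n (w : ℝ → ℝ → ℝ) (Z : ℝ × ℝ → ℂ) : ℝ≥0∞ :=
  ∫⁻ k : ℝ, ∫⁻ η : ℝ, ENNReal.ofReal (w k η) * (‖Z (k, η)‖₊ : ℝ≥0∞)

/-- Weighted `L²(ℝ²)` norm `‖w·Z‖_{L²}` (value in `[0,∞]`). -/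
def L2n (w : ℝ → ℝ → ℝ) (Z : ℝ × ℝ → ℂ) : ℝ≥0∞ :=
  (∫⁻ k : ℝ, ∫⁻ η : ℝ,
      (ENNReal.ofReal (w k η) * (‖Z (k, η)‖₊ : ℝ≥0∞)) ^ 2) ^ ((1 : ℝ) / 2)

/-- Weighted mixed norm `‖w·Z‖_{L²_k L¹_η}` (value in `[0,∞]`). -/
def L2L1n (w : ℝ → ℝ → ℝ) (Z : ℝ × ℝ → ℂ) : ℝ≥0∞ :=
  (∫⁻ k : ℝ,
      (∫⁻ η : ℝ, ENNReal.ofReal (w k η) * (‖Z (k, η)‖₊ : ℝ≥0∞)) ^ 2) ^ ((1 : ℝ) / 2)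

/-- The energy `E = ‖⟨k⟩^m Z‖_{L²} + ‖⟨k⟩^m A(k)(η−kt) Z‖_{L²}`. -/
def En (t μ m : ℝ) (Z : ℝ × ℝ → ℂ) : ℝ≥0∞ :=
  L2n (fun k _ => jap k ^ m) Z + L2n (fun k η => jap k ^ m * Aw μ k * |η - k * t|) Z

/-- The dissipation `D_γ = μ·∬ ⟨k⟩^{2m} p |Z|²`. -/
def Dg (t μ m : ℝ) (Z : ℝ × ℝ → ℂ) : ℝ≥0∞ :=
  ENNReal.ofReal μ * ∫⁻ k : ℝ, ∫⁻ η : ℝ,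
    ENNReal.ofReal (jap k ^ (2 * m) * pw t k η) * (‖Z (k, η)‖₊ : ℝ≥0∞) ^ 2

/-- The dissipation `D_τ = ∬ ⟨k⟩^{2m} k² p⁻¹ |Z|²`. -/
def Dtau (t m : ℝ) (Z : ℝ × ℝ → ℂ) : ℝ≥0∞ :=
  ∫⁻ k : ℝ, ∫⁻ η : ℝ,
    ENNReal.ofReal (jap k ^ (2 * m) * k ^ 2 / pw t k η) * (‖Z (k, η)‖₊ : ℝ≥0∞) ^ 2

/-- The dissipation `D_α = μ·∬ ⟨k⟩^{2m} A(k)² (η−kt)² p |Z|²`. -/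
def Dal (t μ m : ℝ) (Z : ℝ × ℝ → ℂ) : ℝ≥0∞ :=
  ENNReal.ofReal μ * ∫⁻ k : ℝ, ∫⁻ η : ℝ,
    ENNReal.ofReal (jap k ^ (2 * m) * Aw μ k ^ 2 * (η - k * t) ^ 2 * pw t k η)
      * (‖Z (k, η)‖₊ : ℝ≥0∞) ^ 2

/-- The dissipation `D_{τα} = ∬ ⟨k⟩^{2m} A(k)² k² (η−kt)² p⁻¹ |Z|²`. -/
def Dta (t μ m : ℝ) (Z : ℝ × ℝ → ℂ) : ℝ≥0∞ :=
  ∫⁻ k : ℝ, ∫⁻ η : ℝ,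
    ENNReal.ofReal (jap k ^ (2 * m) * Aw μ k ^ 2 * k ^ 2 * (η - k * t) ^ 2 / pw t k η)
      * (‖Z (k, η)‖₊ : ℝ≥0∞) ^ 2

/-- The dissipation `D_β = ∬ ⟨k⟩^{2m} B(k)² k² |Z|²`. -/
def Db (t μ m : ℝ) (Z : ℝ × ℝ → ℂ) : ℝ≥0∞ :=
  ∫⁻ k : ℝ, ∫⁻ η : ℝ,
    ENNReal.ofReal (jap k ^ (2 * m) * Bw μ k ^ 2 * k ^ 2) * (‖Z (k, η)‖₊ : ℝ≥0∞) ^ 2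

/-!
All three estimates are Cauchy–Schwarz against an `L²` profile behaving like `|y|^{-1/4}` near `0`
and like `|y|^{-1/2-s}`, `s > 0`, at infinity.  In the first one the profile is a function of `k`.
In the other two it is a function of `y = η - kt`: after division by the profile the weight is at
most `⟨k⟩^m` where `|y| < 1`, and at most `p^δ` times an energy weight where `|y| ≥ 1`.  The factor
`p^δ` is then interpolated between the energy and the dissipation by Hölder's inequality with
exponents `2δ` and `1 - 2δ`.
-/

section ENNReal

lemma ennreal_rpow_half_sq (x : ℝ≥0∞) : (x ^ ((1 : ℝ) / 2)) ^ 2 = x := by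
  simpa only [one_div, Nat.cast_ofNat] using ENNReal.rpow_inv_natCast_pow two_ne_zero x

lemma ennreal_sq_rpow_half (x : ℝ≥0∞) : (x ^ 2) ^ ((1 : ℝ) / 2) = x := by
  simpa only [one_div, Nat.cast_ofNat] using ENNReal.pow_rpow_inv_natCast two_ne_zero x

lemma mul_rpow_mul_sq_eq_rpow_mul_rpow {δ : ℝ} (hδ : δ ∈ Set.Icc (0 : ℝ) (1 / 2)) (a q z : ℝ≥0∞) :
    (a * q ^ δ * z) ^ 2 = (a ^ 2 * q * z ^ 2) ^ (2 * δ) * ((a * z) ^ 2) ^ (1 - 2 * δ) := by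
  have h₁ : 0 ≤ 2 * δ := by linarith [hδ.1]
  have h₂ : 0 ≤ 1 - 2 * δ := by linarith [hδ.2]
  have hq : q ^ (2 * δ) = (q ^ δ) ^ 2 := by
    rw [mul_comm, ENNReal.rpow_mul, ENNReal.rpow_two]
  have haz : ((a * z) ^ 2) ^ (2 * δ) * ((a * z) ^ 2) ^ (1 - 2 * δ) = (a * z) ^ 2 := by
    rw [← ENNReal.rpow_add_of_nonneg _ _ h₁ h₂, add_sub_cancel, ENNReal.rpow_one]
  calc (a * q ^ δ * z) ^ 2
      = q ^ (2 * δ) * (((a * z) ^ 2) ^ (2 * δ) * ((a * z) ^ 2) ^ (1 - 2 * δ)) := by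
        rw [hq, haz]; ring
    _ = (q * (a * z) ^ 2) ^ (2 * δ) * ((a * z) ^ 2) ^ (1 - 2 * δ) := by
        rw [ENNReal.mul_rpow_of_nonneg _ _ h₁, mul_assoc]
    _ = (a ^ 2 * q * z ^ 2) ^ (2 * δ) * ((a * z) ^ 2) ^ (1 - 2 * δ) := by
        congr 2; ring

lemma ofReal_mul_le_enorm_mul {g v w : ℝ} (hg : 0 ≤ g) (h : w ≤ g * v) (z : ℝ≥0∞) :
    ENNReal.ofReal w * z ≤ ‖g‖ₑ * (ENNReal.ofReal v * z) := by
  rw [← mul_assoc, Real.enorm_of_nonneg hg, ← ENNReal.ofReal_mul hg]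
  gcongr

lemma ofReal_rpow_neg_mul_rpow {μ : ℝ} (hμ : 0 < μ) {δ : ℝ} (hδ : 0 ≤ δ) (X : ℝ≥0∞) :
    ENNReal.ofReal (μ ^ (-δ)) * (ENNReal.ofReal μ * X) ^ δ = X ^ δ := by
  rw [ENNReal.mul_rpow_of_nonneg _ _ hδ, ← mul_assoc, ENNReal.ofReal_rpow_of_pos hμ,
    ← ENNReal.ofReal_mul (by positivity), ← Real.rpow_add hμ, neg_add_cancel, Real.rpow_zero,
    ENNReal.ofReal_one, one_mul]

end ENNReal

section Lintegral

variable {α β : Type*} [MeasurableSpace α] [MeasurableSpace β] {μ : Measure α} {ν : Measure β}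

lemma lintegral_enorm_mul_le_eLpNorm_two_mul {ε : Type*} [TopologicalSpace ε] [ContinuousENorm ε]
    {g : α → ε} (hg : AEStronglyMeasurable g μ) {f : α → ℝ≥0∞} (hf : AEMeasurable f μ) :
    ∫⁻ x, ‖g x‖ₑ * f x ∂μ ≤ eLpNorm g 2 μ * (∫⁻ x, f x ^ 2 ∂μ) ^ ((1 : ℝ) / 2) := by
  have h := ENNReal.lintegral_mul_le_Lp_mul_Lq μ Real.HolderConjugate.two_two hg.enorm hf
  simpa [eLpNorm_eq_lintegral_rpow_enorm_toReal] using h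

lemma lintegral_lintegral_rpow_mul_rpow_le [SFinite ν] {f g : α → β → ℝ≥0∞}
    (hf : Measurable (Function.uncurry f)) (hg : Measurable (Function.uncurry g))
    {p q : ℝ} (hp : 0 ≤ p) (hq : 0 ≤ q) (hpq : p + q = 1) :
    ∫⁻ x, ∫⁻ y, f x y ^ p * g x y ^ q ∂ν ∂μ
      ≤ (∫⁻ x, ∫⁻ y, f x y ∂ν ∂μ) ^ p * (∫⁻ x, ∫⁻ y, g x y ∂ν ∂μ) ^ q := by
  rw [lintegral_lintegral hf.aemeasurable, lintegral_lintegral hg.aemeasurable,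
    lintegral_lintegral ((hf.pow_const p).mul (hg.pow_const q)).aemeasurable]
  exact ENNReal.lintegral_mul_norm_pow_le hf.aemeasurable hg.aemeasurable hp hq hpq

end Lintegral

section PowerProfile

/-- The two-power profile on the line, equal to `|y|^{-a}` for `|y| < 1` and to `|y|^{-b}` for
`|y| ≥ 1`, against which all the weights are compared.  For `a ≠ 0` its value at `y = 0` is the
junk value `0`, so that comparisons with it are only made away from the origin. -/
def powerProfile (a b y : ℝ) : ℝ := if |y| < 1 then |y| ^ (-a) else |y| ^ (-b)

lemma powerProfile_of_abs_lt_one {a b y : ℝ} (hy : |y| < 1) : powerProfile a b y = |y| ^ (-a) :=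
  if_pos hy

lemma powerProfile_of_one_le_abs {a b y : ℝ} (hy : 1 ≤ |y|) : powerProfile a b y = |y| ^ (-b) :=
  if_neg hy.not_gt

lemma powerProfile_nonneg (a b y : ℝ) : 0 ≤ powerProfile a b y := by
  unfold powerProfile; split_ifs <;> positivity

lemma powerProfile_sq (a b y : ℝ) : powerProfile a b y ^ 2 = powerProfile (2 * a) (2 * b) y := by
  rcases lt_or_ge |y| 1 with hy | hy
  · rw [powerProfile_of_abs_lt_one hy, powerProfile_of_abs_lt_one hy,
      ← Real.rpow_mul_natCast (abs_nonneg y)]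
    ring_nf
  · rw [powerProfile_of_one_le_abs hy, powerProfile_of_one_le_abs hy,
      ← Real.rpow_mul_natCast (abs_nonneg y)]
    ring_nf

@[fun_prop]
lemma measurable_powerProfile (a b : ℝ) : Measurable (powerProfile a b) :=
  Measurable.ite (measurableSet_lt (by fun_prop) (by fun_prop)) (by fun_prop) (by fun_prop)

lemma integrable_powerProfile {a b : ℝ} (ha : a < 1) (hb : 1 < b) :
    Integrable (powerProfile a b) := by
  let f : ℝ → ℝ := fun r => if r < 1 then r ^ (-a) else r ^ (-b)
  have h_near : IntegrableOn f (Set.Ioo 0 1) :=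
    ((intervalIntegral.integrableOn_Ioo_rpow_iff zero_lt_one).2 (by linarith)).congr_fun
      (fun r hr => (if_pos hr.2).symm) measurableSet_Ioo
  have h_far : IntegrableOn f (Set.Ici 1) :=
    (integrableOn_Ici_iff_integrableOn_Ioi (by finiteness) |>.2
      (integrableOn_Ioi_rpow_of_lt (by linarith) zero_lt_one)).congr_fun
      (fun r hr => (if_neg (not_lt.2 hr)).symm) measurableSet_Ici
  have h_radial := h_near.union h_far
  rw [Set.Ioo_union_Ici_eq_Ioi zero_lt_one] at h_radial
  refine (integrable_fun_norm_addHaar volume (f := f)).2 ?_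
  simpa only [Module.finrank_self, tsub_self, pow_zero, one_smul] using h_radial

lemma memLp_two_powerProfile {a b : ℝ} (ha : a < 1 / 2) (hb : 1 / 2 < b) :
    MemLp (powerProfile a b) 2 := by
  rw [memLp_two_iff_integrable_sq (measurable_powerProfile a b).aestronglyMeasurable]
  simp only [powerProfile_sq]
  exact integrable_powerProfile (by linarith) (by linarith)

end PowerProfile

section WeightedNorms

variable {u v w : ℝ → ℝ → ℝ} {g : ℝ → ℝ} {Z : ℝ × ℝ → ℂ}

lemma measurable_ofReal_mul_nnnorm (hv : Measurable (Function.uncurry v)) (hZ : Measurable Z) :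
    Measurable (Function.uncurry fun k η => ENNReal.ofReal (v k η) * (‖Z (k, η)‖₊ : ℝ≥0∞)) :=
  hv.ennreal_ofReal.mul hZ.nnnorm.coe_nnreal_ennreal

lemma L2n_add_le (hu : Measurable (Function.uncurry u)) (hv : Measurable (Function.uncurry v))
    (hZ : Measurable Z) : L2n (fun k η => u k η + v k η) Z ≤ L2n u Z + L2n v Z := by
  have hmu := measurable_ofReal_mul_nnnorm hu hZ
  have hmv := measurable_ofReal_mul_nnnorm hv hZ
  have h_add : L2n (fun k η => u k η + v k η) Z
      ≤ (∫⁻ k, ∫⁻ η, (ENNReal.ofReal (u k η) * (‖Z (k, η)‖₊ : ℝ≥0∞)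
          + ENNReal.ofReal (v k η) * (‖Z (k, η)‖₊ : ℝ≥0∞)) ^ 2) ^ ((1 : ℝ) / 2) := by
    unfold L2n
    gcongr
    rw [← add_mul]
    gcongr
    exact ENNReal.ofReal_add_le
  have h_minkowski := ENNReal.lintegral_Lp_add_le (μ := (volume : Measure ℝ).prod volume)
    hmu.aemeasurable hmv.aemeasurable one_le_two
  simp only [ENNReal.rpow_two] at h_minkowski
  refine h_add.trans ?_
  unfold L2n
  rwa [lintegral_lintegral ((hmu.add hmv).pow_const 2).aemeasurable,
    lintegral_lintegral (hmu.pow_const 2).aemeasurable,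
    lintegral_lintegral (hmv.pow_const 2).aemeasurable]

lemma L2n_mul_rpow_le {q : ℝ → ℝ → ℝ} (hu : Measurable (Function.uncurry u))
    (hu₀ : ∀ k η, 0 ≤ u k η) (hq : Measurable (Function.uncurry q)) (hq₀ : ∀ k η, 0 ≤ q k η)
    {δ : ℝ} (hδ : δ ∈ Set.Icc (0 : ℝ) (1 / 2)) (hZ : Measurable Z) :
    L2n (fun k η => u k η * q k η ^ δ) Z
      ≤ (∫⁻ k, ∫⁻ η, ENNReal.ofReal (u k η ^ 2 * q k η) * (‖Z (k, η)‖₊ : ℝ≥0∞) ^ 2) ^ δ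
        * L2n u Z ^ (1 - 2 * δ) := by
  set F : ℝ → ℝ → ℝ≥0∞ := fun k η =>
    ENNReal.ofReal (u k η ^ 2 * q k η) * (‖Z (k, η)‖₊ : ℝ≥0∞) ^ 2 with hF
  set G : ℝ → ℝ → ℝ≥0∞ := fun k η => (ENNReal.ofReal (u k η) * (‖Z (k, η)‖₊ : ℝ≥0∞)) ^ 2 with hG
  have hFm : Measurable (Function.uncurry F) :=
    ((hu.pow_const 2).mul hq).ennreal_ofReal.mul (hZ.nnnorm.coe_nnreal_ennreal.pow_const 2)
  have hGm : Measurable (Function.uncurry G) := (measurable_ofReal_mul_nnnorm hu hZ).pow_const 2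
  have h_pointwise : ∀ k η, (ENNReal.ofReal (u k η * q k η ^ δ) * (‖Z (k, η)‖₊ : ℝ≥0∞)) ^ 2
      = F k η ^ (2 * δ) * G k η ^ (1 - 2 * δ) := fun k η => by
    simp only [hF, hG]
    rw [ENNReal.ofReal_mul (hu₀ k η), ← ENNReal.ofReal_rpow_of_nonneg (hq₀ k η) hδ.1,
      mul_rpow_mul_sq_eq_rpow_mul_rpow hδ, ENNReal.ofReal_mul (sq_nonneg _),
      ENNReal.ofReal_pow (hu₀ k η)]
  calc L2n (fun k η => u k η * q k η ^ δ) Z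
      = (∫⁻ k, ∫⁻ η, F k η ^ (2 * δ) * G k η ^ (1 - 2 * δ)) ^ ((1 : ℝ) / 2) := by
        simp only [L2n, h_pointwise]
    _ ≤ ((∫⁻ k, ∫⁻ η, F k η) ^ (2 * δ) * (∫⁻ k, ∫⁻ η, G k η) ^ (1 - 2 * δ)) ^ ((1 : ℝ) / 2) := by
        gcongr
        exact lintegral_lintegral_rpow_mul_rpow_le hFm hGm (by linarith [hδ.1])
          (by linarith [hδ.2]) (by ring)
    _ = (∫⁻ k, ∫⁻ η, F k η) ^ δ * L2n u Z ^ (1 - 2 * δ) := by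
        rw [ENNReal.mul_rpow_of_nonneg _ _ (by norm_num), L2n, ← ENNReal.rpow_mul,
          ← ENNReal.rpow_mul, ← ENNReal.rpow_mul]
        congr 2 <;> ring

lemma L1n_le_eLpNorm_mul_L2L1n (hg : AEStronglyMeasurable g) (hg₀ : ∀ k, 0 ≤ g k)
    (hv : Measurable (Function.uncurry v)) (hZ : Measurable Z)
    (hw : ∀ᵐ k, ∀ η, w k η ≤ g k * v k η) :
    L1n w Z ≤ eLpNorm g 2 * L2L1n v Z := by
  have hm := measurable_ofReal_mul_nnnorm hv hZ
  have hvk (k : ℝ) : Measurable fun η => ENNReal.ofReal (v k η) * (‖Z (k, η)‖₊ : ℝ≥0∞) :=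
    hm.comp measurable_prodMk_left
  have h_inner : Measurable fun k => ∫⁻ η, ENNReal.ofReal (v k η) * (‖Z (k, η)‖₊ : ℝ≥0∞) :=
    Measurable.lintegral_prod_right' hm
  refine le_trans (lintegral_mono_ae ?_)
    (lintegral_enorm_mul_le_eLpNorm_two_mul hg h_inner.aemeasurable)
  filter_upwards [hw] with k hk
  rw [← lintegral_const_mul _ (hvk k)]
  exact lintegral_mono fun η => ofReal_mul_le_enorm_mul (hg₀ k) (hk η) _

lemma L2L1n_le_eLpNorm_mul_L2n {c : ℝ → ℝ} (hg : AEStronglyMeasurable g) (hg₀ : ∀ y, 0 ≤ g y)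
    (hv : Measurable (Function.uncurry v)) (hZ : Measurable Z)
    (hw : ∀ k, ∀ᵐ η, w k η ≤ g (η - c k) * v k η) :
    L2L1n w Z ≤ eLpNorm g 2 * L2n v Z := by
  have hm := measurable_ofReal_mul_nnnorm hv hZ
  have hvk (k : ℝ) : Measurable fun η => ENNReal.ofReal (v k η) * (‖Z (k, η)‖₊ : ℝ≥0∞) :=
    hm.comp measurable_prodMk_left
  set V : ℝ → ℝ≥0∞ := fun k => ∫⁻ η, (ENNReal.ofReal (v k η) * (‖Z (k, η)‖₊ : ℝ≥0∞)) ^ 2 with hV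
  have hVm : Measurable V := Measurable.lintegral_prod_right' (hm.pow_const 2)
  have h_slice : ∀ k, ∫⁻ η, ENNReal.ofReal (w k η) * (‖Z (k, η)‖₊ : ℝ≥0∞)
      ≤ eLpNorm g 2 * V k ^ ((1 : ℝ) / 2) := fun k => by
    have h_shift := measurePreserving_sub_right (volume : Measure ℝ) (c k)
    rw [← eLpNorm_comp_measurePreserving hg h_shift]
    refine le_trans (lintegral_mono_ae ?_) (lintegral_enorm_mul_le_eLpNorm_two_mul
      (hg.comp_measurePreserving h_shift) (hvk k).aemeasurable)
    filter_upwards [hw k] with η hη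
    exact ofReal_mul_le_enorm_mul (hg₀ _) hη _
  calc L2L1n w Z
      ≤ (∫⁻ k, (eLpNorm g 2 volume * V k ^ ((1 : ℝ) / 2)) ^ 2) ^ ((1 : ℝ) / 2) := by
        unfold L2L1n
        gcongr with k
        exact h_slice k
    _ = (eLpNorm g 2 volume ^ 2 * ∫⁻ k, V k) ^ ((1 : ℝ) / 2) := by
        simp only [mul_pow, ennreal_rpow_half_sq, lintegral_const_mul _ hVm]
    _ = eLpNorm g 2 volume * L2n v Z := by
        rw [ENNReal.mul_rpow_of_nonneg _ _ (by norm_num), ennreal_sq_rpow_half, L2n, hV]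

lemma L2L1n_le_eLpNorm_mul_add_interpolation {u₀ q : ℝ → ℝ → ℝ} {c : ℝ → ℝ}
    (hg : AEStronglyMeasurable g) (hg₀ : ∀ y, 0 ≤ g y)
    (hu₀m : Measurable (Function.uncurry u₀)) (hu : Measurable (Function.uncurry u))
    (hu_nonneg : ∀ k η, 0 ≤ u k η) (hq : Measurable (Function.uncurry q))
    (hq_nonneg : ∀ k η, 0 ≤ q k η) {δ : ℝ} (hδ : δ ∈ Set.Icc (0 : ℝ) (1 / 2)) (hZ : Measurable Z)
    (hw : ∀ k η, η ≠ c k → w k η ≤ g (η - c k) * (u₀ k η + u k η * q k η ^ δ)) :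
    L2L1n w Z ≤ eLpNorm g 2 * (L2n u₀ Z
      + (∫⁻ k, ∫⁻ η, ENNReal.ofReal (u k η ^ 2 * q k η) * (‖Z (k, η)‖₊ : ℝ≥0∞) ^ 2) ^ δ
        * L2n u Z ^ (1 - 2 * δ)) := by
  have huq : Measurable (Function.uncurry fun k η => u k η * q k η ^ δ) := hu.mul (hq.pow_const δ)
  refine (L2L1n_le_eLpNorm_mul_L2n (c := c) hg hg₀ (v := fun k η => u₀ k η + u k η * q k η ^ δ)
    (hu₀m.add huq) hZ fun k => ?_).trans ?_
  · filter_upwards [Measure.ae_ne volume (c k)] with η hη using hw k η hη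
  · gcongr
    refine (L2n_add_le hu₀m huq hZ).trans ?_
    gcongr
    exact L2n_mul_rpow_le hu hu_nonneg hq hq_nonneg hδ hZ

end WeightedNorms

section Weights

lemma one_le_jap (k : ℝ) : 1 ≤ jap k :=
  Real.one_le_sqrt.2 (le_add_of_nonneg_right (sq_nonneg k))

lemma jap_pos (k : ℝ) : 0 < jap k := zero_lt_one.trans_le (one_le_jap k)

lemma abs_le_jap (k : ℝ) : |k| ≤ jap k := Real.abs_le_sqrt (le_add_of_nonneg_left zero_le_one)

lemma jap_rpow_nonneg (m k : ℝ) : 0 ≤ jap k ^ m := Real.rpow_nonneg (jap_pos k).le m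

lemma jap_rpow_sq (m k : ℝ) : (jap k ^ m) ^ 2 = jap k ^ (2 * m) := by
  rw [← Real.rpow_mul_natCast (jap_pos k).le, mul_comm, Nat.cast_ofNat]

@[fun_prop]
lemma measurable_jap : Measurable jap := by unfold jap; fun_prop

lemma pw_nonneg (t k η : ℝ) : 0 ≤ pw t k η := by unfold pw; positivity

lemma sq_left_le_pw (t k η : ℝ) : k ^ 2 ≤ pw t k η := le_add_of_nonneg_right (sq_nonneg _)

lemma sq_right_le_pw (t k η : ℝ) : (η - k * t) ^ 2 ≤ pw t k η :=
  le_add_of_nonneg_left (sq_nonneg _)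

lemma measurable_uncurry_pw (t : ℝ) : Measurable (Function.uncurry (pw t)) := by
  unfold pw; fun_prop

lemma Aw_nonneg {μ : ℝ} (hμ : 0 ≤ μ) (k : ℝ) : 0 ≤ Aw μ k := by
  unfold Aw; split_ifs <;> positivity

lemma Aw_le_one {μ : ℝ} (hμ : 0 < μ) (k : ℝ) : Aw μ k ≤ 1 := by
  unfold Aw
  split_ifs with hk
  · exact le_rfl
  · have hμk : μ ≤ |k| := not_lt.1 hk
    have hk₀ : 0 < |k| := hμ.trans_le hμk
    calc μ ^ ((1 : ℝ) / 3) * |k| ^ (-(1 : ℝ) / 3)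
        ≤ |k| ^ ((1 : ℝ) / 3) * |k| ^ (-(1 : ℝ) / 3) := by gcongr
      _ = 1 := by rw [← Real.rpow_add hk₀]; norm_num

@[fun_prop]
lemma measurable_Aw (μ : ℝ) : Measurable (Aw μ) :=
  Measurable.ite (measurableSet_lt (by fun_prop) (by fun_prop)) (by fun_prop) (by fun_prop)

end Weights

section WeightBounds

lemma abs_rpow_le_rpow_of_sq_le {x p s : ℝ} (h : x ^ 2 ≤ p) (hs : 0 ≤ s) :
    |x| ^ (2 * s) ≤ p ^ s := by
  rw [Real.rpow_mul (abs_nonneg x), Real.rpow_two, sq_abs]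
  gcongr

lemma rpow_neg_le_abs_rpow_of_sq_le {x p s : ℝ} (hx : x ≠ 0) (h : x ^ 2 ≤ p) (hs : 0 ≤ s) :
    p ^ (-s) ≤ |x| ^ (-(2 * s)) := by
  rw [← mul_neg, Real.rpow_mul (abs_nonneg x), Real.rpow_two, sq_abs]
  exact Real.rpow_le_rpow_of_nonpos (by positivity) h (neg_nonpos.2 hs)

lemma jap_rpow_le_powerProfile_mul {m k : ℝ} (hm : 0 ≤ m) (hk : k ≠ 0) :
    jap k ^ (-(1 : ℝ) / 2)
      ≤ powerProfile (1 / 4) (1 / 2 + m) k * (jap k ^ m * min (|k| ^ ((1 : ℝ) / 4)) 1) := by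
  have hk₀ : 0 < |k| := abs_pos.2 hk
  have hj := jap_pos k
  rcases lt_or_ge |k| 1 with h | h
  · rw [powerProfile_of_abs_lt_one h, min_eq_left (Real.rpow_le_one hk₀.le h.le (by norm_num)),
      mul_left_comm, ← Real.rpow_add hk₀, neg_add_cancel, Real.rpow_zero, mul_one]
    exact Real.rpow_le_rpow_of_exponent_le (one_le_jap k) (by linarith)
  · have h_exp : -(1 / 2 + m) ≤ 0 := by linarith
    rw [powerProfile_of_one_le_abs h, min_eq_right (Real.one_le_rpow h (by norm_num)), mul_one]
    calc jap k ^ (-(1 : ℝ) / 2)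
        = jap k ^ (-(1 / 2 + m)) * jap k ^ m := by rw [← Real.rpow_add hj]; ring_nf
      _ ≤ |k| ^ (-(1 / 2 + m)) * jap k ^ m := by
        exact mul_le_mul_of_nonneg_right
          (Real.rpow_le_rpow_of_nonpos hk₀ (abs_le_jap k) h_exp) (by positivity)

lemma min_mul_pw_rpow_le_powerProfile_mul {t k η δ : ℝ} (hδ : 0 ≤ δ) (hη : η ≠ k * t) :
    min (|k| ^ ((1 : ℝ) / 4)) 1 * pw t k η ^ (-(1 : ℝ) / 4)
      ≤ powerProfile (1 / 4) (1 / 2 + 2 * δ) (η - k * t) * (1 + pw t k η ^ δ) := by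
  have hy : η - k * t ≠ 0 := sub_ne_zero.2 hη
  have hyp := sq_right_le_pw t k η
  have hp : 0 < pw t k η := lt_of_lt_of_le (by positivity) hyp
  have h_min : min (|k| ^ ((1 : ℝ) / 4)) 1 ≤ pw t k η ^ ((1 : ℝ) / 8) :=
    calc min (|k| ^ ((1 : ℝ) / 4)) 1
        ≤ |k| ^ ((1 : ℝ) / 4) := min_le_left _ _
      _ = |k| ^ (2 * ((1 : ℝ) / 8)) := by norm_num
      _ ≤ pw t k η ^ ((1 : ℝ) / 8) :=
        abs_rpow_le_rpow_of_sq_le (sq_left_le_pw t k η) (by norm_num)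
  rcases lt_or_ge |η - k * t| 1 with h | h
  · rw [powerProfile_of_abs_lt_one h]
    calc min (|k| ^ ((1 : ℝ) / 4)) 1 * pw t k η ^ (-(1 : ℝ) / 4)
        ≤ pw t k η ^ ((1 : ℝ) / 8) * pw t k η ^ (-(1 : ℝ) / 4) := by gcongr
      _ = pw t k η ^ (-(1 / 8 : ℝ)) := by rw [← Real.rpow_add hp]; norm_num
      _ ≤ |η - k * t| ^ (-(2 * (1 / 8 : ℝ))) :=
        rpow_neg_le_abs_rpow_of_sq_le hy hyp (by norm_num)
      _ = |η - k * t| ^ (-(1 / 4 : ℝ)) := by norm_num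
      _ ≤ |η - k * t| ^ (-(1 / 4 : ℝ)) * (1 + pw t k η ^ δ) :=
        le_mul_of_one_le_right (by positivity) (le_add_of_nonneg_right (by positivity))
  · rw [powerProfile_of_one_le_abs h]
    calc min (|k| ^ ((1 : ℝ) / 4)) 1 * pw t k η ^ (-(1 : ℝ) / 4)
        ≤ pw t k η ^ (-(1 : ℝ) / 4) := mul_le_of_le_one_left (by positivity) (min_le_right _ _)
      _ = pw t k η ^ (-(1 / 4 + δ)) * pw t k η ^ δ := by rw [← Real.rpow_add hp]; ring_nf
      _ ≤ |η - k * t| ^ (-(2 * (1 / 4 + δ))) * pw t k η ^ δ := by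
        gcongr
        exact rpow_neg_le_abs_rpow_of_sq_le hy hyp (by positivity)
      _ = |η - k * t| ^ (-(1 / 2 + 2 * δ)) * pw t k η ^ δ := by ring_nf
      _ ≤ |η - k * t| ^ (-(1 / 2 + 2 * δ)) * (1 + pw t k η ^ δ) := by
        gcongr
        exact le_add_of_nonneg_left zero_le_one

lemma mul_abs_rpow_half_le_powerProfile_mul {a p y δ : ℝ} (ha₀ : 0 ≤ a) (ha₁ : a ≤ 1)
    (hδ : 0 ≤ δ) (hy : y ≠ 0) (hyp : y ^ 2 ≤ p) :
    a * |y| ^ ((1 : ℝ) / 2)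
      ≤ powerProfile (1 / 4) (1 / 2 + 2 * δ) y * (1 + a * |y| * p ^ δ) := by
  have hy₀ : 0 < |y| := abs_pos.2 hy
  have hp₀ : 0 ≤ p := (sq_nonneg y).trans hyp
  rcases lt_or_ge |y| 1 with h | h
  · rw [powerProfile_of_abs_lt_one h]
    calc a * |y| ^ ((1 : ℝ) / 2)
        ≤ 1 := mul_le_one₀ ha₁ (by positivity) (Real.rpow_le_one hy₀.le h.le (by norm_num))
      _ ≤ |y| ^ (-(1 / 4 : ℝ)) :=
        Real.one_le_rpow_of_pos_of_le_one_of_nonpos hy₀ h.le (by norm_num)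
      _ ≤ |y| ^ (-(1 / 4 : ℝ)) * (1 + a * |y| * p ^ δ) :=
        le_mul_of_one_le_right (by positivity) (le_add_of_nonneg_right (by positivity))
  · rw [powerProfile_of_one_le_abs h]
    have h_split : |y| ^ ((1 : ℝ) / 2) = |y| ^ (-(1 / 2 + 2 * δ)) * (|y| * |y| ^ (2 * δ)) := by
      rw [← Real.rpow_one_add' hy₀.le (by positivity), ← Real.rpow_add hy₀]
      ring_nf
    calc a * |y| ^ ((1 : ℝ) / 2)
        = |y| ^ (-(1 / 2 + 2 * δ)) * (a * |y| * |y| ^ (2 * δ)) := by rw [h_split]; ring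
      _ ≤ |y| ^ (-(1 / 2 + 2 * δ)) * (1 + a * |y| * p ^ δ) := by
        gcongr
        refine le_add_of_nonneg_of_le zero_le_one ?_
        gcongr
        exact abs_rpow_le_rpow_of_sq_le hyp hδ

end WeightBounds

section Estimates

variable {m t μ δ : ℝ} {Z : ℝ × ℝ → ℂ}

lemma L1n_le_L2L1n_min (hm : 0 ≤ m) (hZ : Measurable Z) :
    L1n (fun k η => jap k ^ (-(1 : ℝ) / 2) * pw t k η ^ (-(1 : ℝ) / 4)) Z
      ≤ eLpNorm (powerProfile (1 / 4) (1 / 2 + m)) 2 *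
        L2L1n (fun k η =>
          jap k ^ m * min (|k| ^ ((1 : ℝ) / 4)) 1 * pw t k η ^ (-(1 : ℝ) / 4)) Z := by
  have hp := measurable_uncurry_pw t
  refine L1n_le_eLpNorm_mul_L2L1n (measurable_powerProfile _ _).aestronglyMeasurable
    (powerProfile_nonneg _ _) ?_ hZ ?_
  · exact Measurable.mul (by fun_prop) (hp.pow_const _)
  · filter_upwards [Measure.ae_ne volume 0] with k hk η
    rw [← mul_assoc]
    exact mul_le_mul_of_nonneg_right (jap_rpow_le_powerProfile_mul hm hk)
      (Real.rpow_nonneg (pw_nonneg t k η) _)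

lemma L2L1n_min_le (hδ : δ ∈ Set.Icc (0 : ℝ) (1 / 2)) (hμ : 0 < μ) (hZ : Measurable Z) :
    L2L1n (fun k η => jap k ^ m * min (|k| ^ ((1 : ℝ) / 4)) 1 * pw t k η ^ (-(1 : ℝ) / 4)) Z
      ≤ eLpNorm (powerProfile (1 / 4) (1 / 2 + 2 * δ)) 2 *
        (En t μ m Z + ENNReal.ofReal (μ ^ (-δ)) * Dg t μ m Z ^ δ * En t μ m Z ^ (1 - 2 * δ)) := by
  have hj : Measurable (Function.uncurry fun k (_ : ℝ) => jap k ^ m) := by fun_prop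
  have h_energy : L2n (fun k _ => jap k ^ m) Z ≤ En t μ m Z := le_self_add
  refine (L2L1n_le_eLpNorm_mul_add_interpolation (c := fun k => k * t)
    (g := powerProfile (1 / 4) (1 / 2 + 2 * δ))
    (measurable_powerProfile _ _).aestronglyMeasurable (powerProfile_nonneg _ _)
    hj hj (fun k _ => jap_rpow_nonneg m k) (measurable_uncurry_pw t) (pw_nonneg t) hδ hZ
    fun k η hη => ?_).trans ?_
  · have h := mul_le_mul_of_nonneg_left (min_mul_pw_rpow_le_powerProfile_mul hδ.1 hη)
      (jap_rpow_nonneg m k)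
    linear_combination h
  · rw [Dg, ofReal_rpow_neg_mul_rpow hμ hδ.1]
    simp only [jap_rpow_sq]
    gcongr
    linarith [hδ.2]

lemma L2L1n_Aw_le (hδ : δ ∈ Set.Icc (0 : ℝ) (1 / 2)) (hμ : 0 < μ) (hZ : Measurable Z) :
    L2L1n (fun k η => jap k ^ m * Aw μ k * |η - k * t| ^ ((1 : ℝ) / 2)) Z
      ≤ eLpNorm (powerProfile (1 / 4) (1 / 2 + 2 * δ)) 2 *
        (En t μ m Z
          + ENNReal.ofReal (μ ^ (-δ)) * Dal t μ m Z ^ δ * En t μ m Z ^ (1 - 2 * δ)) := by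
  have hj := jap_rpow_nonneg m
  have hA := Aw_nonneg hμ.le
  have h_energy₁ : L2n (fun k _ => jap k ^ m) Z ≤ En t μ m Z := le_self_add
  have h_energy₂ : L2n (fun k η => jap k ^ m * Aw μ k * |η - k * t|) Z ≤ En t μ m Z := le_add_self
  refine (L2L1n_le_eLpNorm_mul_add_interpolation (c := fun k => k * t)
    (g := powerProfile (1 / 4) (1 / 2 + 2 * δ))
    (measurable_powerProfile _ _).aestronglyMeasurable (powerProfile_nonneg _ _)
    (u₀ := fun k _ => jap k ^ m) (u := fun k η => jap k ^ m * Aw μ k * |η - k * t|)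
    (by fun_prop) (by fun_prop) (fun k η => mul_nonneg (mul_nonneg (hj k) (hA k)) (abs_nonneg _))
    (measurable_uncurry_pw t) (pw_nonneg t) hδ hZ fun k η hη => ?_).trans ?_
  · have h := mul_le_mul_of_nonneg_left (mul_abs_rpow_half_le_powerProfile_mul (hA k)
      (Aw_le_one hμ k) hδ.1 (sub_ne_zero.2 hη) (sq_right_le_pw t k η)) (hj k)
    linear_combination h
  · rw [Dal, ofReal_rpow_neg_mul_rpow hμ hδ.1]
    simp only [mul_pow, sq_abs, jap_rpow_sq]
    gcongr
    linarith [hδ.2]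

end Estimates

theorem stmt12_general (m δ : ℝ) (hm : 0 < m) (hδ : δ ∈ Set.Ioc (0 : ℝ) (1 / 2)) :
    ∃ C : ℝ, 0 < C ∧
      ∀ (t μ : ℝ), 0 < μ →
        ∀ Z : ℝ × ℝ → ℂ, Measurable Z →
          (L1n (fun k η => jap k ^ (-(1 : ℝ) / 2) * pw t k η ^ (-(1 : ℝ) / 4)) Z
              ≤ ENNReal.ofReal C *
                  L2L1n (fun k η =>
                    jap k ^ m * min (|k| ^ ((1 : ℝ) / 4)) 1 * pw t k η ^ (-(1 : ℝ) / 4)) Z ∧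
            L2L1n (fun k η =>
                jap k ^ m * min (|k| ^ ((1 : ℝ) / 4)) 1 * pw t k η ^ (-(1 : ℝ) / 4)) Z
              ≤ ENNReal.ofReal C *
                  (En t μ m Z
                    + ENNReal.ofReal (μ ^ (-δ)) * Dg t μ m Z ^ δ
                        * En t μ m Z ^ (1 - 2 * δ))) ∧
          L2L1n (fun k η => jap k ^ m * Aw μ k * |η - k * t| ^ ((1 : ℝ) / 2)) Z
            ≤ ENNReal.ofReal C *
                (En t μ m Z
                  + ENNReal.ofReal (μ ^ (-δ)) * Dal t μ m Z ^ δ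
                      * En t μ m Z ^ (1 - 2 * δ)) := by
  have hδ' : δ ∈ Set.Icc (0 : ℝ) (1 / 2) := Set.Ioc_subset_Icc_self hδ
  set K₁ := eLpNorm (powerProfile (1 / 4) (1 / 2 + m)) 2
  set K₂ := eLpNorm (powerProfile (1 / 4) (1 / 2 + 2 * δ)) 2
  have hK₁ : K₁ ≠ ∞ := (memLp_two_powerProfile (by norm_num) (by linarith)).eLpNorm_ne_top
  have hK₂ : K₂ ≠ ∞ := (memLp_two_powerProfile (by norm_num) (by linarith [hδ.1])).eLpNorm_ne_top
  have hC : K₁ + K₂ + 1 ≠ ∞ := by finiteness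
  refine ⟨(K₁ + K₂ + 1).toReal, ENNReal.toReal_pos (by positivity) hC, fun t μ hμ Z hZ => ?_⟩
  rw [ENNReal.ofReal_toReal hC]
  have hK₁C : K₁ ≤ K₁ + K₂ + 1 := le_self_add.trans le_self_add
  have hK₂C : K₂ ≤ K₁ + K₂ + 1 := le_add_self.trans le_self_add
  exact ⟨⟨(L1n_le_L2L1n_min hm.le hZ).trans (by gcongr),
    (L2L1n_min_le hδ' hμ hZ).trans (by gcongr)⟩, (L2L1n_Aw_le hδ' hμ hZ).trans (by gcongr)⟩

/-- interpolation lemma for the energy: there is `C = C(m,δ)`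
such that for all `t`, `μ ∈ (0,1)` and measurable `Z`:
(i) `‖⟨k⟩^{−1/2} p^{−1/4} Z‖_{L¹} ≤ C‖⟨k⟩^m min(|k|^{1/4},1) p^{−1/4} Z‖_{L²_kL¹_η}
      ≤ C(E + μ^{−δ} D_γ^δ E^{1−2δ})`;
(ii) `‖⟨k⟩^m A(k)|η−kt|^{1/2} Z‖_{L²_kL¹_η} ≤ C(E + μ^{−δ} D_α^δ E^{1−2δ})`. -/
theorem stmt12 (m δ : ℝ) (hm : 0 < m) (hδ : δ ∈ Set.Ioo (0 : ℝ) (1 / 12)) :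
    ∃ C : ℝ, 0 < C ∧
      ∀ (t μ : ℝ), μ ∈ Set.Ioo (0 : ℝ) 1 →
        ∀ Z : ℝ × ℝ → ℂ, Measurable Z →
          (L1n (fun k η => jap k ^ (-(1 : ℝ) / 2) * pw t k η ^ (-(1 : ℝ) / 4)) Z
              ≤ ENNReal.ofReal C *
                  L2L1n (fun k η =>
                    jap k ^ m * min (|k| ^ ((1 : ℝ) / 4)) 1 * pw t k η ^ (-(1 : ℝ) / 4)) Z ∧
            L2L1n (fun k η =>
                jap k ^ m * min (|k| ^ ((1 : ℝ) / 4)) 1 * pw t k η ^ (-(1 : ℝ) / 4)) Z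
              ≤ ENNReal.ofReal C *
                  (En t μ m Z
                    + ENNReal.ofReal (μ ^ (-δ)) * Dg t μ m Z ^ δ
                        * En t μ m Z ^ (1 - 2 * δ))) ∧
          L2L1n (fun k η => jap k ^ m * Aw μ k * |η - k * t| ^ ((1 : ℝ) / 2)) Z
            ≤ ENNReal.ofReal C *
                (En t μ m Z
                  + ENNReal.ofReal (μ ^ (-δ)) * Dal t μ m Z ^ δ
                      * En t μ m Z ^ (1 - 2 * δ)) := by
  obtain ⟨C, hC, h⟩ := stmt12_general m δ hm ⟨hδ.1, by linarith [hδ.2]⟩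
  exact ⟨C, hC, fun t μ hμ => h t μ hμ.1⟩
end
end
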